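/- Assume the curve setup with counterclockwise orientation. Define the kernel K_A(s,t) = ((l(s) − l(t))·n(s))/‖l(s) − l(t)‖² when l(s) ≠ l(t), and K_A(s,t) = −(1/2)·l''(s)·n(s) when l(s) = l(t) (this extension makes K_A continuous). Suppose φ : ℝ → ℂ is continuous, L-periodic and not identically zero, λ ∈ ℂ, and ∫₀^L K_A(s,t)·φ(t) dt = λ·φ(s) for all s ∈ ℝ. Then λ is real and −π < λ ≤ π. -/

import Mathlib

open Real MeasureTheory

/-- Dot product of two points of the plane `ℝ² ≃ ℂ`. -/
noncomputable def dotR (z w : ℂ) : ℝ := z.re * w.re + z.im * w.im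

/-- The unit normal vector `n(s) = (l₂'(s), -l₁'(s))` of a curve `l`. -/
noncomputable def normalv (l : ℝ → ℂ) (s : ℝ) : ℂ := -Complex.I * deriv l s

open Classical in
/-- The double layer kernel `K_A(s,t) = ((l(s) - l(t))·n(s))/‖l(s) - l(t)‖²`, extended
continuously through the diagonal by `-(1/2)·l''(s)·n(s)`. -/
noncomputable def KA (l : ℝ → ℂ) (s t : ℝ) : ℝ :=
  if l s = l t then -(1/2) * dotR (deriv (deriv l) s) (normalv l s)
  else dotR (l s - l t) (normalv l s) / ‖l s - l t‖ ^ 2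

/-!
Write `U_a` for the logarithmic potential of a density `a` of mean zero on the curve, `f_a` for its
Cauchy transform, so that `∇ U_a = conj f_a` off the curve, and `E(a, b) = ∫ a U_b` for the energy
form. Integrating over the whole plane gives `∫ |f_a|² = -2π E(a, a)`, so that `-E` is an inner
product on continuous densities of mean zero. Since `∂ U_a / ∂n` jumps across the curve, integrating
over its interior gives `∫ W f_a conj f_b = E(A a, b) - π E(a, b)` up to an imaginary part, where
`W` is the winding number. Hence `A` is symmetric for `-E`, and an eigenvalue `λ` with eigenfunction
`φ` of mean zero is real with `∫_int |f_φ|² = (λ - π) E(φ, φ)` and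
`∫_ext |f_φ|² = -(λ + π) E(φ, φ)`; thus `-π ≤ λ ≤ π`, and `λ = -π` would make `U_φ` constant outside
the curve, hence on it, so `E(φ, φ) = 0`. An eigenfunction whose mean is not zero has eigenvalue `π`
because `K_A` has integral `π` in its first variable.

Instead of Green's theorem and the Jordan curve theorem, the argument uses the integrals
`∫ dz / ((z - p) conj (z - q))` of pairs of Cauchy kernels, whose logarithmic divergence at infinity
cancels under a mean zero condition, and the winding number `W` itself, which takes only the values
`0` and `1` off the curve: every point can be moved to a point near the curve without changing `W`.
-/

section DoubleLayer

open Set Filter Topology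
open scoped ENNReal ComplexConjugate

/-! ### Planar integrals of Cauchy kernels -/

theorem integral_eq_integral_circleMap {E : Type*} [NormedAddCommGroup E] [NormedSpace ℝ E]
    {f : ℂ → E} (hm : StronglyMeasurable f) (hf : Integrable f) (c : ℂ) :
    ∫ z, f z = ∫ r in Ioi (0 : ℝ), ∫ θ in (-π)..π, r • f (circleMap c r θ) := by
  have hsymm (p : ℝ × ℝ) : Complex.polarCoord.symm p + c = circleMap c p.1 p.2 := by
    rw [Complex.polarCoord_symm_apply, circleMap, Complex.exp_mul_I, add_comm]; simp
  have hint : IntegrableOn (fun p : ℝ × ℝ ↦ p.1 • f (circleMap c p.1 p.2))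
      (Ioi (0 : ℝ) ×ˢ Ioo (-π) π) := by
    refine ⟨(measurable_fst.stronglyMeasurable.smul
      (hm.comp_measurable (by unfold circleMap; fun_prop))).aestronglyMeasurable, ?_⟩
    have hpolar := Complex.lintegral_comp_polarCoord_symm fun z ↦ ‖f (z + c)‖ₑ
    simp_rw [hsymm] at hpolar
    refine (setLIntegral_congr_fun (measurableSet_Ioi.prod measurableSet_Ioo) ?_).trans_lt
      (hpolar.trans_lt (hf.comp_add_right c).2)
    rintro ⟨r, θ⟩ ⟨hr, -⟩
    simp only [enorm_smul, smul_eq_mul, Real.enorm_eq_ofReal (mem_Ioi.1 hr).le]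
  rw [← integral_add_right_eq_self f c, ← Complex.integral_comp_polarCoord_symm]
  simp_rw [hsymm, polarCoord_target]
  rw [Measure.volume_eq_prod, setIntegral_prod _ hint]
  simp_rw [intervalIntegral.integral_of_le (by linarith [pi_pos] : -π ≤ π),
    integral_Ioc_eq_integral_Ioo]

theorem integral_circleMap_sub_div {c a : ℂ} {r : ℝ} (hr : 0 < r) (ha : ‖a - c‖ ≠ r) :
    ∫ θ in (-π)..π, (circleMap c r θ - c) / (circleMap c r θ - a) =
      if ‖a - c‖ < r then (2 * π : ℂ) else 0 := by
  have hp : Function.Periodic (fun θ ↦ (circleMap c r θ - c) / (circleMap c r θ - a)) (2 * π) :=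
    fun θ ↦ by simp only [periodic_circleMap c r θ]
  have hshift := hp.intervalIntegral_add_eq 0 (-π)
  rw [show -π + 2 * π = π by ring, zero_add] at hshift
  have hcircle : ∮ z in C(c, r), (z - a)⁻¹ = Complex.I *
      ∫ θ in (-π)..π, (circleMap c r θ - c) / (circleMap c r θ - a) := by
    rw [← hshift, circleIntegral, ← intervalIntegral.integral_const_mul]
    congr 1 with θ
    rw [deriv_circleMap, circleMap_sub_center, smul_eq_mul]; ring
  refine mul_left_cancel₀ Complex.I_ne_zero (hcircle.symm.trans ?_)
  split_ifs with hlt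
  · rw [circleIntegral.integral_sub_inv_of_mem_ball (by simpa [dist_eq_norm] using hlt)]; ring
  · have hne {z : ℂ} (hz : ‖z - c‖ ≤ r) : z - a ≠ 0 := by
      rw [sub_ne_zero]; rintro rfl
      exact hlt (lt_of_le_of_ne hz ha)
    rw [mul_zero]
    refine Complex.circleIntegral_eq_zero_of_differentiable_on_off_countable hr.le countable_empty
      (fun z hz ↦ ContinuousAt.continuousWithinAt (by
        have := hne (mem_closedBall_iff_norm.1 hz); fun_prop (disch := assumption)))
      (fun z hz ↦ ?_)
    have := hne (mem_ball_iff_norm.1 hz.1).le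
    fun_prop (disch := assumption)

theorem integral_Ioi_inv_mul_ite_sub_ite {x y : ℝ} (hx : 0 < x) (hy : 0 < y) :
    ∫ r in Ioi (0 : ℝ), r⁻¹ * ((if x < r then 1 else 0) - (if y < r then 1 else 0)) =
      log y - log x := by
  wlog hxy : x ≤ y generalizing x y
  · rw [← neg_sub, ← this hy hx (le_of_not_ge hxy), ← integral_neg]
    congr 1 with r; ring
  have hind : ∀ r : ℝ, r⁻¹ * ((if x < r then 1 else 0) - (if y < r then 1 else 0)) =
      indicator (Ioc x y) (fun r ↦ r⁻¹) r := by
    intro r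
    by_cases h1 : x < r <;> by_cases h2 : y < r <;> simp [indicator, h1, h2]
    linarith
  simp_rw [hind]
  rw [setIntegral_indicator measurableSet_Ioc,
    inter_eq_right.2 (Ioc_subset_Ioi_self.trans (Ioi_subset_Ioi hx.le)),
    ← intervalIntegral.integral_of_le hxy, integral_inv_of_pos hx hy, log_div hy.ne' hx.ne']

theorem integral_circleMap_inv_mul_inv_mul_conj_inv {a b c : ℂ} (hac : a ≠ c) {r : ℝ}
    (hr : 0 < r) (hra : ‖a - b‖ ≠ r) (hrc : ‖c - b‖ ≠ r) :
    ∫ θ in (-π)..π, r • ((circleMap b r θ - a) * (circleMap b r θ - c) *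
      conj (circleMap b r θ - b))⁻¹ = 2 * π / (a - c) *
      ((r⁻¹ * ((if ‖a - b‖ < r then 1 else 0) - (if ‖c - b‖ < r then 1 else 0)) : ℝ) : ℂ) := by
  have hne {p : ℂ} (hp : ‖p - b‖ ≠ r) (θ : ℝ) : circleMap b r θ - p ≠ 0 := fun h ↦ hp <| by
    rw [← sub_eq_zero.1 h]; simp [abs_of_pos hr]
  have hr' : (r : ℂ) ≠ 0 := by exact_mod_cast hr.ne'
  have hac' : a - c ≠ 0 := sub_ne_zero.2 hac
  -- On the circle `‖z - b‖ = r` one has `conj (z - b) = r ^ 2 / (z - b)`.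
  have hpartial (θ : ℝ) : r • ((circleMap b r θ - a) * (circleMap b r θ - c) *
      conj (circleMap b r θ - b))⁻¹ = (r * (a - c))⁻¹ * ((circleMap b r θ - b) /
        (circleMap b r θ - a) - (circleMap b r θ - b) / (circleMap b r θ - c)) := by
    have hb : circleMap b r θ - b ≠ 0 := sub_ne_zero.2 (circleMap_ne_center hr.ne')
    have hconj : conj (circleMap b r θ - b) = r ^ 2 / (circleMap b r θ - b) := by
      rw [eq_div_iff hb, mul_comm, Complex.mul_conj, Complex.normSq_eq_norm_sq]
      simp
    have := hne hra θ
    have := hne hrc θ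
    rw [hconj, Complex.real_smul]; field_simp; ring
  have hcont {p : ℂ} (hp : ‖p - b‖ ≠ r) : IntervalIntegrable
      (fun θ ↦ (circleMap b r θ - b) / (circleMap b r θ - p)) volume (-π) π :=
    (Continuous.div (by fun_prop) (by fun_prop) (hne hp)).intervalIntegrable _ _
  simp_rw [hpartial]
  rw [intervalIntegral.integral_const_mul, intervalIntegral.integral_sub (hcont hra) (hcont hrc),
    integral_circleMap_sub_div hr hra, integral_circleMap_sub_div hr hrc]
  split_ifs <;> simp <;> field_simp

theorem integral_inv_mul_inv_mul_conj_inv {a b c : ℂ} (ha : a ≠ b) (hc : c ≠ b)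
    (hac : a ≠ c) (hint : Integrable fun z : ℂ ↦ ((z - a) * (z - c) * conj (z - b))⁻¹) :
    ∫ z : ℂ, ((z - a) * (z - c) * conj (z - b))⁻¹ =
      2 * π / (a - c) * (log ‖c - b‖ - log ‖a - b‖ : ℝ) := by
  have hcircle : ∀ᵐ r : ℝ, r ∈ Ioi (0 : ℝ) →
      ∫ θ in (-π)..π, r • ((circleMap b r θ - a) * (circleMap b r θ - c) *
        conj (circleMap b r θ - b))⁻¹ = 2 * π / (a - c) *
        ((r⁻¹ * ((if ‖a - b‖ < r then 1 else 0) - (if ‖c - b‖ < r then 1 else 0)) : ℝ) : ℂ) := by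
    filter_upwards [Measure.ae_ne volume ‖a - b‖, Measure.ae_ne volume ‖c - b‖] with r hra hrc hr
    exact integral_circleMap_inv_mul_inv_mul_conj_inv hac hr hra.symm hrc.symm
  rw [integral_eq_integral_circleMap (Measurable.stronglyMeasurable (by fun_prop)) hint b,
    setIntegral_congr_ae measurableSet_Ioi hcircle, integral_const_mul, integral_complex_ofReal,
    integral_Ioi_inv_mul_ite_sub_ite (norm_pos_iff.2 (sub_ne_zero.2 ha))
      (norm_pos_iff.2 (sub_ne_zero.2 hc))]

theorem integrableOn_ball_inv_sub (c a : ℂ) (ρ : ℝ) :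
    IntegrableOn (fun z : ℂ ↦ (z - a)⁻¹) (Metric.ball c ρ) := by
  have hball : IntegrableOn (fun z : ℂ ↦ z⁻¹) (Metric.ball 0 (ρ + ‖c - a‖)) := by
    refine integrableOn_ball_of_norm_le_rpow (C := 1) (α := 1) (by simp) (by simp)
      (Eventually.of_forall fun z ↦ ?_) (by fun_prop)
    rw [Real.rpow_neg_one, norm_inv, one_mul]
  refine IntegrableOn.mono_set (t := (· - a) ⁻¹' Metric.ball 0 (ρ + ‖c - a‖)) ?_ fun z hz ↦ ?_
  · exact ((measurePreserving_sub_right volume a).integrableOn_comp_preimage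
      (MeasurableEquiv.subRight a).measurableEmbedding).2 hball
  · rw [mem_preimage, mem_ball_zero_iff, ← sub_add_sub_cancel z c a]
    exact (norm_add_le _ _).trans_lt (by linarith [mem_ball_iff_norm.1 hz])

theorem integral_Ioi_ite_lt_ite_lt {x ρ : ℝ} (hx : 0 ≤ x) (hρ : 0 < ρ) :
    ∫ r in Ioi (0 : ℝ), (if r < ρ then (if x < r then 2 * π * r else 0) else 0) =
      π * max (ρ ^ 2 - x ^ 2) 0 := by
  have hind (r : ℝ) : (if r < ρ then (if x < r then 2 * π * r else 0) else 0) =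
      indicator (Ioo x ρ) (fun r ↦ 2 * π * r) r := by
    by_cases h1 : x < r <;> by_cases h2 : r < ρ <;> simp [indicator, h1, h2]
  simp_rw [hind]
  rw [setIntegral_indicator measurableSet_Ioo,
    inter_eq_right.2 (Ioo_subset_Ioi_self.trans (Ioi_subset_Ioi hx))]
  rcases le_or_gt ρ x with h | h
  · rw [Ioo_eq_empty (by linarith), max_eq_right (by nlinarith)]; simp
  · rw [← integral_Ioc_eq_integral_Ioo, ← intervalIntegral.integral_of_le h.le,
      intervalIntegral.integral_const_mul, integral_id, max_eq_left (by nlinarith)]; ring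

theorem setIntegral_ball_sub_div_sub (c a : ℂ) {ρ : ℝ} (hρ : 0 < ρ) :
    ∫ z in Metric.ball c ρ, (z - c) / (z - a) = (π * max (ρ ^ 2 - ‖a - c‖ ^ 2) 0 : ℝ) := by
  have hball : MeasurableSet (Metric.ball c ρ) := Metric.isOpen_ball.measurableSet
  have hint : IntegrableOn (fun z ↦ (z - c) / (z - a)) (Metric.ball c ρ) := by
    refine (integrableOn_ball_inv_sub c a ρ).bdd_mul (by fun_prop) (c := ρ) ?_
    exact (ae_restrict_iff' hball).2 (Eventually.of_forall fun z hz ↦ (mem_ball_iff_norm.1 hz).le)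
  have hcircle : ∀ᵐ r : ℝ, r ∈ Ioi (0 : ℝ) → ∫ θ in (-π)..π,
      r • indicator (Metric.ball c ρ) (fun z ↦ (z - c) / (z - a)) (circleMap c r θ) =
        ((if r < ρ then (if ‖a - c‖ < r then 2 * π * r else 0) else 0 : ℝ) : ℂ) := by
    filter_upwards [Measure.ae_ne volume ‖a - c‖] with r hra (hr : 0 < r)
    have hmem (θ : ℝ) : circleMap c r θ ∈ Metric.ball c ρ ↔ r < ρ := by
      simp [mem_ball_iff_norm, -Metric.mem_ball, abs_of_pos hr]
    by_cases hlt : r < ρ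
    · simp_rw [indicator_of_mem ((hmem _).2 hlt), intervalIntegral.integral_smul,
        integral_circleMap_sub_div hr hra.symm, if_pos hlt]
      split_ifs <;> simp
      ring
    · simp_rw [indicator_of_notMem (mt (hmem _).1 hlt), if_neg hlt]
      simp
  rw [← integral_indicator hball, integral_eq_integral_circleMap
      (Measurable.stronglyMeasurable (.indicator (by fun_prop) hball))
      (hint.integrable_indicator hball) c, setIntegral_congr_ae measurableSet_Ioi hcircle,
    integral_complex_ofReal, integral_Ioi_ite_lt_ite_lt (norm_nonneg _) hρ]

/-! ### Logarithmic potentials and energy -/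

section RieszKernel

variable {E : Type*} [NormedAddCommGroup E] [NormedSpace ℝ E] [FiniteDimensional ℝ E]
  [MeasurableSpace E] [BorelSpace E] (ν : Measure E) [ν.IsAddHaarMeasure]

theorem setLIntegral_ball_inv_enorm_rpow_lt_top [Nontrivial E] (R : ℝ) {q : ℝ}
    (hq : q < Module.finrank ℝ E) : ∫⁻ x in Metric.ball 0 R, ‖x‖ₑ⁻¹ ^ q ∂ν < ∞ := by
  have hint : IntegrableOn (fun x : E ↦ ‖x‖ ^ (-q)) (Metric.ball 0 R) ν := by
    refine integrableOn_ball_of_norm_le_rpow (C := 1) Module.finrank_pos hq ?_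
      (measurable_norm.pow_const _).aestronglyMeasurable
    exact Eventually.of_forall fun x ↦ by rw [one_mul, Real.norm_of_nonneg (by positivity)]
  refine (lintegral_congr_ae ?_).trans_lt hint.lintegral_lt_top
  filter_upwards [ae_restrict_of_ae (Measure.ae_ne ν 0)] with x hx
  rw [ENNReal.inv_rpow, ← ENNReal.rpow_neg, ← ofReal_norm,
    ENNReal.ofReal_rpow_of_pos (norm_pos_iff.2 hx)]

theorem exists_setLIntegral_inv_enorm_sub_rpow_le [Nontrivial E] {S : Set E} (hS : ν S < ∞)
    {q : ℝ} (hq₀ : 0 ≤ q) (hq : q < Module.finrank ℝ E) :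
    ∃ C < ∞, ∀ y, ∫⁻ x in S, ‖x - y‖ₑ⁻¹ ^ q ∂ν ≤ C := by
  refine ⟨(∫⁻ x in Metric.ball 0 1, ‖x‖ₑ⁻¹ ^ q ∂ν) + ν S,
    ENNReal.add_lt_top.2 ⟨setLIntegral_ball_inv_enorm_rpow_lt_top ν 1 hq, hS⟩, fun y ↦ ?_⟩
  have hsplit (x : E) : ‖x - y‖ₑ⁻¹ ^ q ≤
      (Metric.ball (0 : E) 1).indicator (fun x ↦ ‖x‖ₑ⁻¹ ^ q) (x - y) + 1 := by
    by_cases hx : x - y ∈ Metric.ball (0 : E) 1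
    · rw [indicator_of_mem hx]; exact le_self_add
    · have : 1 ≤ ‖x - y‖ₑ := by
        rw [← ofReal_norm, ENNReal.one_le_ofReal]; simpa using hx
      exact (ENNReal.rpow_le_one (ENNReal.inv_le_one.2 this) hq₀).trans le_add_self
  calc ∫⁻ x in S, ‖x - y‖ₑ⁻¹ ^ q ∂ν
      ≤ ∫⁻ x in S, ((Metric.ball (0 : E) 1).indicator (fun x ↦ ‖x‖ₑ⁻¹ ^ q) (x - y) + 1) ∂ν :=
        lintegral_mono hsplit
    _ ≤ (∫⁻ x, (Metric.ball (0 : E) 1).indicator (fun x ↦ ‖x‖ₑ⁻¹ ^ q) (x - y) ∂ν) + ν S := by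
        rw [lintegral_add_right _ measurable_const, setLIntegral_one]
        gcongr
        exact Measure.restrict_le_self
    _ = (∫⁻ x in Metric.ball 0 1, ‖x‖ₑ⁻¹ ^ q ∂ν) + ν S := by
        rw [lintegral_sub_right_eq_self, lintegral_indicator measurableSet_ball]

end RieszKernel

/-- A finite measure `μ`, carried by the bounded set parametrized by `l`, whose Riesz potential of
order `3/4` is bounded on the plane. Any exponent in `(1/2, 1)` would serve the same purpose: the
Cauchy transforms of bounded densities are then in `L³`. As `0⁻¹ = ∞` in `ℝ≥0∞`, no point has
positive mass. -/
structure HasBoundedRieszPotential {T : Type*} [MeasurableSpace T] (μ : Measure T) (l : T → ℂ) :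
    Prop where
  measurable : Measurable l
  exists_norm_le : ∃ M, ∀ t, ‖l t‖ ≤ M
  exists_lintegral_le : ∃ C < ∞, ∀ z, ∫⁻ t, ‖z - l t‖ₑ⁻¹ ^ (3 / 4 : ℝ) ∂μ ≤ C

namespace HasBoundedRieszPotential

variable {T : Type*} [MeasurableSpace T] {μ : Measure T} {l : T → ℂ}

theorem ae_ne (h : HasBoundedRieszPotential μ l) (z : ℂ) : ∀ᵐ t ∂μ, z ≠ l t := by
  obtain ⟨C, hC, hle⟩ := h.exists_lintegral_le
  have hl := h.measurable
  filter_upwards [ae_lt_top (by fun_prop) ((hle z).trans_lt hC).ne] with t ht hz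
  simp [hz] at ht

theorem exists_lintegral_pow_three_le (h : HasBoundedRieszPotential μ l) :
    ∃ C < ∞, ∀ z, (∫⁻ t, ‖z - l t‖ₑ⁻¹ ∂μ) ^ 3 ≤ C * ∫⁻ t, ‖z - l t‖ₑ⁻¹ ^ (3 / 2 : ℝ) ∂μ := by
  obtain ⟨C, hC, hle⟩ := h.exists_lintegral_le
  have hl := h.measurable
  refine ⟨C ^ 2, by finiteness, fun z ↦ ?_⟩
  have hholder := ENNReal.lintegral_mul_le_Lp_mul_Lq μ (p := 3) (q := 3 / 2)
    (by constructor <;> norm_num) (f := fun t ↦ ‖z - l t‖ₑ⁻¹ ^ (1 / 2 : ℝ))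
    (g := fun t ↦ ‖z - l t‖ₑ⁻¹ ^ (1 / 2 : ℝ)) (by fun_prop) (by fun_prop)
  have hsqrt (x : ℝ≥0∞) : x ^ (1 / 2 : ℝ) * x ^ (1 / 2 : ℝ) = x := by
    rw [← ENNReal.rpow_add_of_nonneg _ _ (by norm_num) (by norm_num)]
    norm_num
  simp only [Pi.mul_apply, hsqrt, ← ENNReal.rpow_mul] at hholder
  norm_num at hholder
  calc (∫⁻ t, ‖z - l t‖ₑ⁻¹ ∂μ) ^ 3
      ≤ ((∫⁻ t, ‖z - l t‖ₑ⁻¹ ^ (3 / 2 : ℝ) ∂μ) ^ (1 / 3 : ℝ) *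
        (∫⁻ t, ‖z - l t‖ₑ⁻¹ ^ (3 / 4 : ℝ) ∂μ) ^ (2 / 3 : ℝ)) ^ 3 := by gcongr
    _ = (∫⁻ t, ‖z - l t‖ₑ⁻¹ ^ (3 / 4 : ℝ) ∂μ) ^ 2 * ∫⁻ t, ‖z - l t‖ₑ⁻¹ ^ (3 / 2 : ℝ) ∂μ := by
        rw [mul_pow, ← ENNReal.rpow_natCast, ← ENNReal.rpow_natCast, ← ENNReal.rpow_mul,
          ← ENNReal.rpow_mul, ← ENNReal.rpow_natCast, mul_comm]
        norm_num
    _ ≤ C ^ 2 * ∫⁻ t, ‖z - l t‖ₑ⁻¹ ^ (3 / 2 : ℝ) ∂μ := by gcongr; exact hle z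

theorem setLIntegral_ball_pow_three_lt_top [IsFiniteMeasure μ] (h : HasBoundedRieszPotential μ l)
    (R : ℝ) : ∫⁻ z in Metric.ball 0 R, (∫⁻ t, ‖z - l t‖ₑ⁻¹ ∂μ) ^ 3 < ∞ := by
  obtain ⟨C, hC, hle⟩ := h.exists_lintegral_pow_three_le
  have hl := h.measurable
  obtain ⟨D, hD, hball⟩ := exists_setLIntegral_inv_enorm_sub_rpow_le volume
    (S := Metric.ball (0 : ℂ) R) measure_ball_lt_top (q := 3 / 2) (by norm_num)
    (by rw [Complex.finrank_real_complex]; norm_num)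
  calc ∫⁻ z in Metric.ball 0 R, (∫⁻ t, ‖z - l t‖ₑ⁻¹ ∂μ) ^ 3
      ≤ ∫⁻ z in Metric.ball 0 R, C * ∫⁻ t, ‖z - l t‖ₑ⁻¹ ^ (3 / 2 : ℝ) ∂μ := lintegral_mono hle
    _ = C * ∫⁻ t, (∫⁻ z in Metric.ball 0 R, ‖z - l t‖ₑ⁻¹ ^ (3 / 2 : ℝ)) ∂μ := by
        rw [lintegral_const_mul' _ _ hC.ne, lintegral_lintegral_swap (by fun_prop)]
    _ ≤ C * ∫⁻ _, D ∂μ := by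
        gcongr with t
        exact hball (l t)
    _ < ∞ := by
        rw [lintegral_const]
        exact ENNReal.mul_lt_top hC (ENNReal.mul_lt_top hD (measure_lt_top μ univ))

theorem setLIntegral_compl_ball_pow_three_lt_top [IsFiniteMeasure μ] {M : ℝ}
    (hM : ∀ t, ‖l t‖ ≤ M) :
    ∫⁻ z in (Metric.ball 0 (2 * M + 1))ᶜ, (∫⁻ t, ‖z - l t‖ₑ⁻¹ ∂μ) ^ 3 < ∞ := by
  have hdecay : ∫⁻ z : ℂ, ENNReal.ofReal ((1 + ‖z‖) ^ (-3 : ℝ)) < ∞ :=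
    finite_integral_one_add_norm (by simp; norm_num)
  have hinv {z : ℂ} (hz : z ∈ (Metric.ball 0 (2 * M + 1))ᶜ) (t : T) :
      ‖z - l t‖ₑ⁻¹ ≤ 2 * ENNReal.ofReal (1 + ‖z‖)⁻¹ := by
    have hz : 2 * M + 1 ≤ ‖z‖ := by simpa using hz
    have hsub := norm_sub_norm_le z (l t)
    have hpos : 0 < 1 + ‖z‖ := by positivity
    rw [← ofReal_norm, ← ENNReal.ofReal_inv_of_pos (by linarith [hM t]),
      ← ENNReal.ofReal_ofNat 2, ← ENNReal.ofReal_mul zero_le_two, ← div_eq_mul_inv, ← inv_div]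
    exact ENNReal.ofReal_le_ofReal (inv_anti₀ (by positivity) (by linarith [hM t]))
  calc ∫⁻ z in (Metric.ball 0 (2 * M + 1))ᶜ, (∫⁻ t, ‖z - l t‖ₑ⁻¹ ∂μ) ^ 3
      ≤ ∫⁻ z : ℂ in (Metric.ball 0 (2 * M + 1))ᶜ,
          (2 * μ univ) ^ 3 * ENNReal.ofReal ((1 + ‖z‖) ^ (-3 : ℝ)) := by
        refine setLIntegral_mono' measurableSet_ball.compl fun z hz ↦ ?_
        have hpow : ENNReal.ofReal ((1 + ‖z‖) ^ (-3 : ℝ)) = ENNReal.ofReal (1 + ‖z‖)⁻¹ ^ 3 := by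
          rw [← ENNReal.ofReal_pow (by positivity), Real.rpow_neg (by positivity), inv_pow]
          norm_num
        rw [hpow, ← mul_pow]
        gcongr
        calc ∫⁻ t, ‖z - l t‖ₑ⁻¹ ∂μ ≤ ∫⁻ _, 2 * ENNReal.ofReal (1 + ‖z‖)⁻¹ ∂μ :=
              lintegral_mono (hinv hz)
          _ = 2 * μ univ * ENNReal.ofReal (1 + ‖z‖)⁻¹ := by rw [lintegral_const]; ring
    _ ≤ (2 * μ univ) ^ 3 * ∫⁻ z : ℂ, ENNReal.ofReal ((1 + ‖z‖) ^ (-3 : ℝ)) := by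
        rw [lintegral_const_mul' _ _ (by finiteness)]
        gcongr
        exact Measure.restrict_le_self
    _ < ∞ := ENNReal.mul_lt_top (by finiteness) hdecay

theorem lintegral_pow_three_lt_top [IsFiniteMeasure μ] (h : HasBoundedRieszPotential μ l) :
    ∫⁻ z, (∫⁻ t, ‖z - l t‖ₑ⁻¹ ∂μ) ^ 3 < ∞ := by
  obtain ⟨M, hM⟩ := h.exists_norm_le
  rw [← lintegral_add_compl _ (measurableSet_ball (x := (0 : ℂ)) (ε := 2 * M + 1))]
  exact ENNReal.add_lt_top.2
    ⟨h.setLIntegral_ball_pow_three_lt_top _, setLIntegral_compl_ball_pow_three_lt_top hM⟩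

end HasBoundedRieszPotential
theorem abs_log_max_le {x R δ : ℝ} (hδ : 0 < δ) (hx : x ≤ R) :
    |log (max x δ)| ≤ max |log δ| |log (max R δ)| :=
  abs_le_max_abs_abs (log_le_log hδ (le_max_right _ _))
    (log_le_log (by positivity) (max_le_max_right δ hx))

theorem enorm_log_sub_log_max_le {x δ : ℝ} (hx : 0 ≤ x) (hδ : 0 < δ) :
    ‖log x - log (max x δ)‖ₑ ≤
      ENNReal.ofReal (4 / 3 * δ ^ (3 / 4 : ℝ)) * ‖x‖ₑ⁻¹ ^ (3 / 4 : ℝ) := by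
  rcases le_or_gt δ x with hδx | hxδ
  · simp [max_eq_left hδx]
  rcases hx.eq_or_lt with rfl | hx
  · rw [enorm_zero, ENNReal.inv_zero, ENNReal.top_rpow_of_pos (by norm_num), ENNReal.mul_top]
    · exact le_top
    · simpa using by positivity
  rw [max_eq_right hxδ.le, enorm_sub_rev, ← log_div hδ.ne' hx.ne', Real.enorm_eq_ofReal hx.le,
    Real.enorm_eq_ofReal (log_nonneg ((one_le_div hx).2 hxδ.le)), ← ENNReal.ofReal_inv_of_pos hx,
    ENNReal.ofReal_rpow_of_pos (inv_pos.2 hx), ← ENNReal.ofReal_mul (by positivity)]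
  refine ENNReal.ofReal_le_ofReal ((log_le_rpow_div (ε := 3 / 4) (by positivity)
    (by norm_num)).trans_eq ?_)
  rw [div_eq_mul_inv δ, mul_rpow hδ.le (by positivity)]
  ring

theorem enorm_log_norm_le (z : ℂ) : ‖log ‖z‖‖ₑ ≤ ‖z‖ₑ + 2 * ‖z‖ₑ⁻¹ ^ (3 / 4 : ℝ) := by
  rcases eq_or_ne z 0 with rfl | hz
  · simp
  have hz : 0 < ‖z‖ := norm_pos_iff.2 hz
  have hupper := log_le_sub_one_of_pos hz
  have hlower := log_le_rpow_div (inv_nonneg.2 hz.le) (show (0 : ℝ) < 3 / 4 by norm_num)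
  have hpow : 0 ≤ ‖z‖⁻¹ ^ (3 / 4 : ℝ) := by positivity
  rw [log_inv] at hlower
  rw [← ofReal_norm z, ← ENNReal.ofReal_inv_of_pos hz, ENNReal.ofReal_rpow_of_nonneg
    (by positivity) (by norm_num), ← ENNReal.ofReal_ofNat 2, ← ENNReal.ofReal_mul zero_le_two,
    ← ENNReal.ofReal_add hz.le (by positivity), ← ofReal_norm]
  refine ENNReal.ofReal_le_ofReal (abs_le.2 ⟨?_, ?_⟩) <;> linarith

theorem enorm_inv_le {𝕜 : Type*} [NormedDivisionRing 𝕜] (x : 𝕜) : ‖x⁻¹‖ₑ ≤ ‖x‖ₑ⁻¹ := by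
  rcases eq_or_ne x 0 with rfl | hx
  · simp
  · exact (enorm_inv hx).le

/-- The Cauchy transform of the density `a` on the set parametrized by `l`. Densities may be real
or complex. -/
noncomputable def cauchyTransform {T 𝕜 : Type*} [MeasurableSpace T] [SMul 𝕜 ℂ] (μ : Measure T)
    (l : T → ℂ) (a : T → 𝕜) (z : ℂ) : ℂ :=
  ∫ t, a t • (z - l t)⁻¹ ∂μ

/-- The logarithmic potential of the density `b` on the set parametrized by `l`, with the sign
convention that makes it subharmonic for `0 ≤ b`. -/
noncomputable def logPotential {T : Type*} [MeasurableSpace T] (μ : Measure T) (l : T → ℂ)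
    (b : T → ℝ) (z : ℂ) : ℝ :=
  ∫ t, b t * log ‖z - l t‖ ∂μ

/-- The mutual logarithmic energy of two densities. With the sign convention of `logPotential` it
is negative definite on densities of total mass zero. -/
noncomputable def logEnergy {T : Type*} [MeasurableSpace T] (μ : Measure T) (l : T → ℂ)
    (a b : T → ℝ) : ℝ :=
  ∫ t, a t * logPotential μ l b (l t) ∂μ

namespace HasBoundedRieszPotential

variable {T : Type*} [MeasurableSpace T] {μ : Measure T} [IsFiniteMeasure μ] {l : T → ℂ}

theorem integrable_log_norm_sub (h : HasBoundedRieszPotential μ l) (z : ℂ) :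
    Integrable (fun t ↦ log ‖z - l t‖) μ := by
  obtain ⟨M, hM⟩ := h.exists_norm_le
  obtain ⟨C, hC, hle⟩ := h.exists_lintegral_le
  have hl := h.measurable
  refine ⟨Measurable.aestronglyMeasurable (by fun_prop), ?_⟩
  calc ∫⁻ t, ‖log ‖z - l t‖‖ₑ ∂μ
      ≤ ∫⁻ t, (ENNReal.ofReal (‖z‖ + M) + 2 * ‖z - l t‖ₑ⁻¹ ^ (3 / 4 : ℝ)) ∂μ := by
        refine lintegral_mono fun t ↦ (enorm_log_norm_le _).trans ?_
        gcongr
        rw [← ofReal_norm]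
        exact ENNReal.ofReal_le_ofReal ((norm_sub_le _ _).trans (by gcongr; exact hM t))
    _ = ENNReal.ofReal (‖z‖ + M) * μ univ + 2 * ∫⁻ t, ‖z - l t‖ₑ⁻¹ ^ (3 / 4 : ℝ) ∂μ := by
        rw [lintegral_add_left measurable_const, lintegral_const,
          lintegral_const_mul' _ _ (by simp)]
    _ ≤ ENNReal.ofReal (‖z‖ + M) * μ univ + 2 * C := by gcongr; exact hle z
    _ < ∞ := by finiteness

theorem integrable_mul_log_norm_sub (h : HasBoundedRieszPotential μ l) {b : T → ℝ}
    (hb : MemLp b ∞ μ) (z : ℂ) : Integrable (fun t ↦ b t * log ‖z - l t‖) μ :=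
  (h.integrable_log_norm_sub z).mul_of_top_right hb

theorem continuous_integral_mul_log_max (h : HasBoundedRieszPotential μ l) {b : T → ℝ}
    (hb : MemLp b ∞ μ) {δ : ℝ} (hδ : 0 < δ) :
    Continuous fun z ↦ ∫ t, b t * log (max ‖z - l t‖ δ) ∂μ := by
  obtain ⟨M, hM⟩ := h.exists_norm_le
  have hl := h.measurable
  refine continuous_iff_continuousAt.2 fun z₀ ↦ continuousAt_of_dominated
    (bound := fun t ↦ ‖b t‖ * max |log δ| |log (max (‖z₀‖ + 1 + M) δ)|) ?_ ?_
    ((hb.integrable le_top).norm.mul_const _) ?_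
  · exact Eventually.of_forall fun z ↦ hb.1.mul (Measurable.aestronglyMeasurable (by fun_prop))
  · filter_upwards [Metric.ball_mem_nhds z₀ one_pos] with z hz
    refine Eventually.of_forall fun t ↦ ?_
    rw [norm_mul]
    gcongr
    refine abs_log_max_le hδ ?_
    linarith [norm_sub_le z (l t), hM t, norm_sub_norm_le z z₀, mem_ball_iff_norm.1 hz]
  · refine Eventually.of_forall fun t ↦ ?_
    have hne : max ‖z₀ - l t‖ δ ≠ 0 := (hδ.trans_le (le_max_right _ _)).ne'
    exact continuousAt_const.mul (ContinuousAt.log (by fun_prop) hne)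

theorem edist_logPotential_integral_mul_log_max_le (h : HasBoundedRieszPotential μ l) {b : T → ℝ}
    (hb : MemLp b ∞ μ) {δ : ℝ} (hδ : 0 < δ) (z : ℂ) :
    edist (logPotential μ l b z) (∫ t, b t * log (max ‖z - l t‖ δ) ∂μ) ≤
      eLpNorm b ∞ μ * (ENNReal.ofReal (4 / 3 * δ ^ (3 / 4 : ℝ)) *
        ∫⁻ t, ‖z - l t‖ₑ⁻¹ ^ (3 / 4 : ℝ) ∂μ) := by
  obtain ⟨M, hM⟩ := h.exists_norm_le
  have hl := h.measurable
  have hmax : Integrable (fun t ↦ b t * log (max ‖z - l t‖ δ)) μ :=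
    Integrable.mul_of_top_right (.of_bound (Measurable.aestronglyMeasurable (by fun_prop)) _
      (Eventually.of_forall fun t ↦ abs_log_max_le hδ
        ((norm_sub_le z (l t)).trans (add_le_add_right (hM t) _)))) hb
  rw [edist_eq_enorm_sub, logPotential, ← integral_sub (h.integrable_mul_log_norm_sub hb z) hmax,
    ← lintegral_const_mul' _ _ ENNReal.ofReal_ne_top, ← lintegral_const_mul' _ _ hb.2.ne]
  refine (enorm_integral_le_lintegral_enorm _).trans (lintegral_mono_ae ?_)
  filter_upwards [ae_le_eLpNormEssSup (f := b)] with t ht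
  rw [← mul_sub, enorm_mul, eLpNorm_exponent_top]
  gcongr
  simpa using enorm_log_sub_log_max_le (norm_nonneg (z - l t)) hδ

theorem continuous_logPotential (h : HasBoundedRieszPotential μ l) {b : T → ℝ}
    (hb : MemLp b ∞ μ) : Continuous (logPotential μ l b) := by
  obtain ⟨C, hC, hle⟩ := h.exists_lintegral_le
  have hlim : Tendsto (fun δ : ℝ ↦ eLpNorm b ∞ μ * (ENNReal.ofReal (4 / 3 * δ ^ (3 / 4 : ℝ)) * C))
      (𝓝[>] 0) (𝓝 0) := by
    have hpow : Tendsto (fun δ : ℝ ↦ 4 / 3 * δ ^ (3 / 4 : ℝ)) (𝓝[>] 0) (𝓝 0) := by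
      have hcont : ContinuousAt (fun δ : ℝ ↦ 4 / 3 * δ ^ (3 / 4 : ℝ)) 0 :=
        continuousAt_const.mul (continuousAt_rpow_const 0 _ (.inr (by norm_num)))
      simpa using hcont.tendsto.mono_left nhdsWithin_le_nhds
    simpa using ENNReal.Tendsto.const_mul (ENNReal.Tendsto.mul_const
      (ENNReal.tendsto_ofReal hpow) (.inr hC.ne)) (.inr hb.2.ne)
  have hunif : TendstoUniformly (fun δ z ↦ ∫ t, b t * log (max ‖z - l t‖ δ) ∂μ)
      (logPotential μ l b) (𝓝[>] (0 : ℝ)) := by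
    refine EMetric.tendstoUniformly_iff.2 fun ε hε ↦ ?_
    filter_upwards [hlim.eventually_lt_const hε, self_mem_nhdsWithin] with δ hδε hδ z
    refine ((h.edist_logPotential_integral_mul_log_max_le hb hδ z).trans ?_).trans_lt hδε
    gcongr
    exact hle z
  refine hunif.continuous (Eventually.frequently ?_)
  filter_upwards [self_mem_nhdsWithin] with δ hδ
  exact h.continuous_integral_mul_log_max hb hδ

theorem memLp_top_logPotential (h : HasBoundedRieszPotential μ l) {b : T → ℝ}
    (hb : MemLp b ∞ μ) : MemLp (fun t ↦ logPotential μ l b (l t)) ∞ μ := by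
  obtain ⟨M, hM⟩ := h.exists_norm_le
  have hcont := h.continuous_logPotential hb
  obtain ⟨C, hC⟩ := (isCompact_closedBall (0 : ℂ) M).exists_bound_of_continuousOn
    hcont.continuousOn
  exact memLp_top_of_bound (hcont.measurable.comp h.measurable).aestronglyMeasurable C
    (Eventually.of_forall fun t ↦ hC _ (mem_closedBall_zero_iff.2 (hM t)))

theorem ae_integrable_inv_sub (h : HasBoundedRieszPotential μ l) :
    ∀ᵐ z, Integrable (fun t ↦ (z - l t)⁻¹) μ := by
  have hl := h.measurable
  filter_upwards [ae_lt_top (Measurable.pow_const (by fun_prop) 3)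
    h.lintegral_pow_three_lt_top.ne] with z hz
  exact ⟨Measurable.aestronglyMeasurable (by fun_prop), (lintegral_mono fun t ↦
    enorm_inv_le _).trans_lt ((ENNReal.pow_lt_top_iff.1 hz).resolve_right three_ne_zero)⟩

theorem integrable_mul_inv_mul_inv_mul_conj_inv (h : HasBoundedRieszPotential μ l)
    {g : (T × T) × T → ℂ} (hg : MemLp g ∞ ((μ.prod μ).prod μ)) :
    Integrable (fun q : ℂ × (T × T) × T ↦
      g q.2 * ((q.1 - l q.2.1.1) * (q.1 - l q.2.1.2) * conj (q.1 - l q.2.2))⁻¹)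
      (volume.prod ((μ.prod μ).prod μ)) := by
  have hl := h.measurable
  have hconj : Measurable (conj : ℂ → ℂ) := Complex.continuous_conj.measurable
  have hkernel : Integrable (fun q : ℂ × (T × T) × T ↦
      ((q.1 - l q.2.1.1) * (q.1 - l q.2.1.2) * conj (q.1 - l q.2.2))⁻¹)
      (volume.prod ((μ.prod μ).prod μ)) := by
    refine ⟨Measurable.aestronglyMeasurable (by fun_prop), ?_⟩
    refine (lintegral_mono (g := fun q ↦ ‖q.1 - l q.2.1.1‖ₑ⁻¹ * ‖q.1 - l q.2.1.2‖ₑ⁻¹ *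
      ‖q.1 - l q.2.2‖ₑ⁻¹) fun q ↦ ?_).trans_lt ?_
    · simp only [mul_inv, enorm_mul]
      gcongr
      · exact enorm_inv_le _
      · exact enorm_inv_le _
      · exact (enorm_inv_le _).trans_eq (by rw [RCLike.enorm_conj])
    rw [lintegral_prod _ (by fun_prop)]
    refine (lintegral_congr fun z ↦ ?_).trans_lt h.lintegral_pow_three_lt_top
    rw [lintegral_prod_mul (f := fun p : T × T ↦ ‖z - l p.1‖ₑ⁻¹ * ‖z - l p.2‖ₑ⁻¹)
      (g := fun u ↦ ‖z - l u‖ₑ⁻¹) (by fun_prop) (by fun_prop),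
      lintegral_prod_mul (f := fun s ↦ ‖z - l s‖ₑ⁻¹) (g := fun t ↦ ‖z - l t‖ₑ⁻¹)
      (by fun_prop) (by fun_prop)]
    ring
  refine hkernel.bdd_mul (c := (eLpNorm g ∞ ((μ.prod μ).prod μ)).toReal) hg.1.comp_snd ?_
  filter_upwards [Measure.quasiMeasurePreserving_snd.ae (ae_le_eLpNormEssSup (f := g))] with q hq
  rw [← toReal_enorm]
  exact ENNReal.toReal_mono hg.2.ne (by simpa using hq)

end HasBoundedRieszPotential

/-- The two-point analogue of the Cauchy transform, for a weight `w` on pairs of parameters. The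
energy identities are obtained by testing it against a conjugate Cauchy transform. -/
noncomputable def pairTransform {T : Type*} [MeasurableSpace T] (μ : Measure T) (l : T → ℂ)
    (w : T × T → ℂ) (z : ℂ) : ℂ :=
  ∫ p, w p * ((z - l p.1) * (z - l p.2))⁻¹ ∂(μ.prod μ)

namespace HasBoundedRieszPotential

variable {T : Type*} [MeasurableSpace T] {μ : Measure T} [IsFiniteMeasure μ] {l : T → ℂ}

theorem ae_prod_ne (h : HasBoundedRieszPotential μ l) {S : Type*} [MeasurableSpace S]
    (ν : Measure S) {f : S → ℂ} (hf : Measurable f) : ∀ᵐ p ∂(ν.prod μ), f p.1 ≠ l p.2 := by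
  have hl := h.measurable
  refine (Measure.ae_prod_iff_ae_ae (measurableSet_eq_fun (f := fun p : S × T ↦ f p.1)
    (g := fun p ↦ l p.2) (by fun_prop) (by fun_prop)).compl).2 ?_
  exact Eventually.of_forall fun s ↦ h.ae_ne (f s)

theorem ae_integral_inv_mul_inv_mul_conj_inv (h : HasBoundedRieszPotential μ l) :
    ∀ᵐ q : (T × T) × T ∂((μ.prod μ).prod μ),
      ∫ z, ((z - l q.1.1) * (z - l q.1.2) * conj (z - l q.2))⁻¹ =
        2 * π / (l q.1.1 - l q.1.2) * (log ‖l q.1.2 - l q.2‖ - log ‖l q.1.1 - l q.2‖ : ℝ) := by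
  have hl := h.measurable
  have hint := (h.integrable_mul_inv_mul_inv_mul_conj_inv (memLp_const 1)).prod_left_ae
  filter_upwards [Measure.quasiMeasurePreserving_fst.ae (h.ae_prod_ne μ hl),
    h.ae_prod_ne (μ.prod μ) (f := fun p ↦ l p.1) (by fun_prop),
    h.ae_prod_ne (μ.prod μ) (f := fun p ↦ l p.2) (by fun_prop), hint] with q hst hsu htu hq
  exact integral_inv_mul_inv_mul_conj_inv hsu htu hst (by simpa only [one_mul] using hq)

theorem integral_prod_eq_pairTransform_mul (w : T × T → ℂ) (b : T → ℝ) (z : ℂ) :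
    ∫ q, w q.1 * b q.2 * ((z - l q.1.1) * (z - l q.1.2) * conj (z - l q.2))⁻¹
      ∂((μ.prod μ).prod μ) = pairTransform μ l w z * conj (cauchyTransform μ l b z) := by
  rw [pairTransform, cauchyTransform, ← integral_conj, ← integral_prod_mul]
  congr 1 with q
  simp only [Complex.real_smul, map_mul, map_inv₀, Complex.conj_ofReal, mul_inv]
  ring

variable {w : T × T → ℂ} {b : T → ℝ}

theorem memLp_top_mul_fst_snd (hw : MemLp w ∞ (μ.prod μ)) (hb : MemLp b ∞ μ) :
    MemLp (fun q : (T × T) × T ↦ w q.1 * b q.2) ∞ ((μ.prod μ).prod μ) :=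
  (hb.ofReal.comp_snd (μ.prod μ)).mul (hw.comp_fst μ)

theorem integrable_pairTransform_mul_conj (h : HasBoundedRieszPotential μ l)
    (hw : MemLp w ∞ (μ.prod μ)) (hb : MemLp b ∞ μ) :
    Integrable fun z ↦ pairTransform μ l w z * conj (cauchyTransform μ l b z) := by
  refine (h.integrable_mul_inv_mul_inv_mul_conj_inv
    (memLp_top_mul_fst_snd hw hb)).integral_prod_left.congr ?_
  exact Eventually.of_forall fun z ↦ integral_prod_eq_pairTransform_mul w b z

theorem integrable_prod_integral_kernel (h : HasBoundedRieszPotential μ l)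
    (hw : MemLp w ∞ (μ.prod μ)) (hb : MemLp b ∞ μ) :
    Integrable (fun q : (T × T) × T ↦ w q.1 * b q.2 * (2 * π / (l q.1.1 - l q.1.2) *
      (log ‖l q.1.2 - l q.2‖ - log ‖l q.1.1 - l q.2‖ : ℝ))) ((μ.prod μ).prod μ) := by
  refine (h.integrable_mul_inv_mul_inv_mul_conj_inv
    (memLp_top_mul_fst_snd hw hb)).integral_prod_right.congr ?_
  filter_upwards [h.ae_integral_inv_mul_inv_mul_conj_inv] with q hq
  rw [integral_const_mul, hq]

theorem integral_kernel_eq_logPotential_sub (h : HasBoundedRieszPotential μ l)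
    (hb : MemLp b ∞ μ) (w : T × T → ℂ) (p : T × T) :
    ∫ u, w p * b u * (2 * π / (l p.1 - l p.2) *
      (log ‖l p.2 - l u‖ - log ‖l p.1 - l u‖ : ℝ)) ∂μ = w p * (2 * π / (l p.1 - l p.2)) *
        (logPotential μ l b (l p.2) - logPotential μ l b (l p.1) : ℝ) := by
  rw [logPotential, logPotential, ← integral_sub (h.integrable_mul_log_norm_sub hb _)
    (h.integrable_mul_log_norm_sub hb _), ← integral_complex_ofReal, ← integral_const_mul]
  congr 1 with u
  push_cast
  ring

theorem integrable_mul_logPotential_sub (h : HasBoundedRieszPotential μ l)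
    (hw : MemLp w ∞ (μ.prod μ)) (hb : MemLp b ∞ μ) :
    Integrable (fun p ↦ w p * (2 * π / (l p.1 - l p.2)) *
      (logPotential μ l b (l p.2) - logPotential μ l b (l p.1) : ℝ)) (μ.prod μ) := by
  refine (h.integrable_prod_integral_kernel hw hb).integral_prod_left.congr ?_
  exact Eventually.of_forall fun p ↦ h.integral_kernel_eq_logPotential_sub hb w p

theorem integral_pairTransform_mul_conj (h : HasBoundedRieszPotential μ l)
    (hw : MemLp w ∞ (μ.prod μ)) (hb : MemLp b ∞ μ) :
    ∫ z, pairTransform μ l w z * conj (cauchyTransform μ l b z) =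
      ∫ p, w p * (2 * π / (l p.1 - l p.2)) *
        (logPotential μ l b (l p.2) - logPotential μ l b (l p.1) : ℝ) ∂(μ.prod μ) := by
  have hint := h.integrable_mul_inv_mul_inv_mul_conj_inv (memLp_top_mul_fst_snd hw hb)
  calc ∫ z, pairTransform μ l w z * conj (cauchyTransform μ l b z)
      = ∫ z, ∫ q, w q.1 * b q.2 * ((z - l q.1.1) * (z - l q.1.2) * conj (z - l q.2))⁻¹
          ∂((μ.prod μ).prod μ) := by simp_rw [integral_prod_eq_pairTransform_mul]
    _ = ∫ q, (∫ z, w q.1 * b q.2 * ((z - l q.1.1) * (z - l q.1.2) * conj (z - l q.2))⁻¹)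
          ∂((μ.prod μ).prod μ) := integral_integral_swap hint
    _ = ∫ q, w q.1 * b q.2 * (2 * π / (l q.1.1 - l q.1.2) *
          (log ‖l q.1.2 - l q.2‖ - log ‖l q.1.1 - l q.2‖ : ℝ)) ∂((μ.prod μ).prod μ) := by
        refine integral_congr_ae ?_
        filter_upwards [h.ae_integral_inv_mul_inv_mul_conj_inv] with q hq
        rw [integral_const_mul, hq]
    _ = _ := by
        rw [integral_prod _ (h.integrable_prod_integral_kernel hw hb)]
        exact integral_congr_ae
          (Eventually.of_forall fun p ↦ h.integral_kernel_eq_logPotential_sub hb w p)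

theorem memLp_top_mul_sub (h : HasBoundedRieszPotential μ l) {a : T → ℝ} (ha : MemLp a ∞ μ) :
    MemLp (fun p : T × T ↦ a p.1 * (l p.1 - l p.2)) ∞ (μ.prod μ) := by
  obtain ⟨M, hM⟩ := h.exists_norm_le
  have hl := h.measurable
  have hsub : MemLp (fun p : T × T ↦ l p.1 - l p.2) ∞ (μ.prod μ) :=
    memLp_top_of_bound (Measurable.aestronglyMeasurable (by fun_prop)) (M + M)
      (Eventually.of_forall fun p ↦ (norm_sub_le _ _).trans (add_le_add (hM _) (hM _)))
  exact hsub.mul (ha.ofReal.comp_fst μ)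

theorem pairTransform_mul_sub (h : HasBoundedRieszPotential μ l) {a : T → ℝ} (ha : MemLp a ∞ μ)
    (hmean : ∫ t, a t ∂μ = 0) :
    ∀ᵐ z, pairTransform μ l (fun p ↦ a p.1 * (l p.1 - l p.2)) z =
      μ.real univ * cauchyTransform μ l a z := by
  filter_upwards [h.ae_integrable_inv_sub] with z hz
  have hfst : Integrable (fun p : T × T ↦ (a p.1 * (z - l p.1)⁻¹ : ℂ) * 1) (μ.prod μ) :=
    (hz.mul_of_top_right ha.ofReal).mul_prod (integrable_const 1)
  have hsnd : Integrable (fun p : T × T ↦ (a p.1 : ℂ) * (z - l p.2)⁻¹) (μ.prod μ) :=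
    (ha.ofReal.integrable le_top).mul_prod hz
  calc pairTransform μ l (fun p ↦ a p.1 * (l p.1 - l p.2)) z
      = ∫ p, ((a p.1 * (z - l p.1)⁻¹ : ℂ) * 1 - a p.1 * (z - l p.2)⁻¹) ∂(μ.prod μ) := by
        refine integral_congr_ae ?_
        filter_upwards [Measure.quasiMeasurePreserving_fst.ae (h.ae_ne z),
          Measure.quasiMeasurePreserving_snd.ae (h.ae_ne z)] with p h₁ h₂
        have h₁ := sub_ne_zero.2 h₁
        have h₂ := sub_ne_zero.2 h₂
        field_simp
        ring
    _ = (∫ t, (a t : ℂ) * (z - l t)⁻¹ ∂μ) * (∫ _, 1 ∂μ) -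
          (∫ t, (a t : ℂ) ∂μ) * ∫ t, (z - l t)⁻¹ ∂μ := by
        rw [integral_sub hfst hsnd, integral_prod_mul (fun t ↦ (a t : ℂ) * (z - l t)⁻¹)
          (fun _ ↦ 1), integral_prod_mul (fun t ↦ (a t : ℂ)) fun t ↦ (z - l t)⁻¹]
    _ = μ.real univ * cauchyTransform μ l a z := by
        rw [integral_complex_ofReal, hmean]
        simp [cauchyTransform, mul_comm]

theorem integral_cauchyTransform_mul_conj (h : HasBoundedRieszPotential μ l) {a : T → ℝ}
    (ha : MemLp a ∞ μ) (hmean : ∫ t, a t ∂μ = 0) (hb : MemLp b ∞ μ) :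
    ∫ z, cauchyTransform μ l a z * conj (cauchyTransform μ l b z) =
      (-2 * π * logEnergy μ l a b : ℝ) := by
  rcases eq_or_ne μ 0 with rfl | hμ
  · simp [cauchyTransform, logEnergy]
  have hw := h.memLp_top_mul_sub ha
  set U := fun t ↦ logPotential μ l b (l t)
  have hU : MemLp U ∞ μ := h.memLp_top_logPotential hb
  have hfst : Integrable (fun p : T × T ↦ a p.1 * U p.2) (μ.prod μ) :=
    (ha.integrable le_top).mul_prod (hU.integrable le_top)
  have hsnd : Integrable (fun p : T × T ↦ a p.1 * U p.1 * 1) (μ.prod μ) :=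
    ((hU.integrable le_top).mul_of_top_right ha).mul_prod (integrable_const 1)
  have hmul : (μ.real univ : ℂ) ≠ 0 := by
    simpa [measureReal_def, ENNReal.toReal_eq_zero_iff] using hμ
  refine mul_left_cancel₀ hmul ?_
  calc μ.real univ * ∫ z, cauchyTransform μ l a z * conj (cauchyTransform μ l b z)
      = ∫ z, pairTransform μ l (fun p ↦ a p.1 * (l p.1 - l p.2)) z *
          conj (cauchyTransform μ l b z) := by
        rw [← integral_const_mul]
        refine integral_congr_ae ?_
        filter_upwards [h.pairTransform_mul_sub ha hmean] with z hz
        rw [hz, mul_assoc]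
    _ = ∫ p, ((2 * π * (a p.1 * U p.2 - a p.1 * U p.1 * 1) : ℝ) : ℂ) ∂(μ.prod μ) := by
        rw [h.integral_pairTransform_mul_conj hw hb]
        refine integral_congr_ae ?_
        filter_upwards [h.ae_prod_ne μ h.measurable] with p hp
        have := sub_ne_zero.2 hp
        push_cast
        field_simp
        rfl
    _ = (2 * π * ((∫ t, a t ∂μ) * (∫ t, U t ∂μ) - logEnergy μ l a b * (∫ _, 1 ∂μ)) : ℝ) := by
        rw [integral_complex_ofReal, integral_const_mul, integral_sub hfst hsnd,
          integral_prod_mul, integral_prod_mul (fun t ↦ a t * U t) (fun _ ↦ 1)]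
        rfl
    _ = _ := by
        rw [hmean, integral_const, smul_eq_mul]
        push_cast
        ring

variable {a c : T → ℝ}

theorem logEnergy_comm (h : HasBoundedRieszPotential μ l)
    (ha : MemLp a ∞ μ) (ha₀ : ∫ t, a t ∂μ = 0) (hb : MemLp b ∞ μ) (hb₀ : ∫ t, b t ∂μ = 0) :
    logEnergy μ l a b = logEnergy μ l b a := by
  have hab := h.integral_cauchyTransform_mul_conj ha ha₀ hb
  have hba := congrArg conj (h.integral_cauchyTransform_mul_conj hb hb₀ ha)
  simp_rw [← integral_conj, map_mul, Complex.conj_conj, Complex.conj_ofReal, mul_comm] at hab hba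
  exact mul_left_cancel₀ (show (-2 * π : ℝ) ≠ 0 by simp [pi_ne_zero])
    (Complex.ofReal_injective (by simpa only [mul_comm] using hab.symm.trans hba))

theorem logEnergy_linearCombination_left (h : HasBoundedRieszPotential μ l) (x y : ℝ)
    (ha : MemLp a ∞ μ) (hb : MemLp b ∞ μ) (hc : MemLp c ∞ μ) :
    logEnergy μ l (fun t ↦ x * a t + y * b t) c =
      x * logEnergy μ l a c + y * logEnergy μ l b c := by
  have hint {d : T → ℝ} (hd : MemLp d ∞ μ) :
      Integrable (fun t ↦ d t * logPotential μ l c (l t)) μ :=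
    ((h.memLp_top_logPotential hc).integrable le_top).mul_of_top_right hd
  simp_rw [logEnergy, add_mul, mul_assoc]
  rw [integral_add ((hint ha).const_mul x) ((hint hb).const_mul y), integral_const_mul,
    integral_const_mul]

theorem integral_norm_sq_cauchyTransform (h : HasBoundedRieszPotential μ l)
    (ha : MemLp a ∞ μ) (ha₀ : ∫ t, a t ∂μ = 0) :
    ∫ z, ‖cauchyTransform μ l a z‖ ^ 2 = -2 * π * logEnergy μ l a a := by
  have := h.integral_cauchyTransform_mul_conj ha ha₀ ha
  simp_rw [Complex.mul_conj'] at this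
  exact_mod_cast this

theorem integrable_norm_sq_cauchyTransform (h : HasBoundedRieszPotential μ l)
    (ha : MemLp a ∞ μ) (ha₀ : ∫ t, a t ∂μ = 0) :
    Integrable fun z ↦ ‖cauchyTransform μ l a z‖ ^ 2 := by
  rcases eq_or_ne μ 0 with rfl | hμ
  · simp [cauchyTransform]
  have hmul : (μ.real univ : ℂ) ≠ 0 := by
    simpa [measureReal_def, ENNReal.toReal_eq_zero_iff] using hμ
  have hint := (h.integrable_pairTransform_mul_conj (h.memLp_top_mul_sub ha) ha).const_mul
    (μ.real univ : ℂ)⁻¹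
  refine hint.norm.congr ?_
  filter_upwards [h.pairTransform_mul_sub ha ha₀] with z hz
  rw [hz, mul_assoc, inv_mul_cancel_left₀ hmul, norm_mul, RCLike.norm_conj, sq]

theorem logEnergy_self_nonpos (h : HasBoundedRieszPotential μ l) (ha : MemLp a ∞ μ)
    (ha₀ : ∫ t, a t ∂μ = 0) : logEnergy μ l a a ≤ 0 := by
  have hnonneg : 0 ≤ ∫ z, ‖cauchyTransform μ l a z‖ ^ 2 := integral_nonneg fun z ↦ by positivity
  rw [h.integral_norm_sq_cauchyTransform ha ha₀] at hnonneg
  nlinarith [pi_pos]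

theorem cauchyTransform_ae_eq_zero (h : HasBoundedRieszPotential μ l) (ha : MemLp a ∞ μ)
    (ha₀ : ∫ t, a t ∂μ = 0) (hE : logEnergy μ l a a = 0) :
    cauchyTransform μ l a =ᵐ[volume] 0 := by
  have hzero := h.integral_norm_sq_cauchyTransform ha ha₀
  rw [hE, mul_zero, integral_eq_zero_iff_of_nonneg (fun z ↦ by positivity)
    (h.integrable_norm_sq_cauchyTransform ha ha₀)] at hzero
  filter_upwards [hzero] with z hz
  simpa using hz

theorem integrable_prod_restrict_ball (h : HasBoundedRieszPotential μ l) (ha : MemLp a ∞ μ)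
    (c : ℂ) (ρ : ℝ) :
    Integrable (fun q : ℂ × T ↦ a q.2 * ((q.1 - c) / (q.1 - l q.2)))
      ((volume.restrict (Metric.ball c ρ)).prod μ) := by
  have hl := h.measurable
  have : IsFiniteMeasure (volume.restrict (Metric.ball c ρ)) :=
    isFiniteMeasure_restrict.2 measure_ball_lt_top.ne
  have hinv : Integrable (fun q : ℂ × T ↦ (q.1 - l q.2)⁻¹)
      ((volume.restrict (Metric.ball c ρ)).prod μ) := by
    refine ⟨Measurable.aestronglyMeasurable (by fun_prop), ?_⟩
    rw [hasFiniteIntegral_iff_enorm, lintegral_prod_symm' _ (by fun_prop)]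
    obtain ⟨D, hD, hball⟩ := exists_setLIntegral_inv_enorm_sub_rpow_le volume
      (S := Metric.ball c ρ) measure_ball_lt_top zero_le_one (by simp)
    have hle (t : T) : ∫⁻ z in Metric.ball c ρ, ‖(z - l t)⁻¹‖ₑ ≤ D :=
      (lintegral_mono fun z ↦ (enorm_inv_le _).trans_eq (ENNReal.rpow_one _).symm).trans
        (hball (l t))
    refine (lintegral_mono hle).trans_lt ?_
    rw [lintegral_const]
    exact ENNReal.mul_lt_top hD (measure_lt_top μ univ)
  have hsub : MemLp (fun z : ℂ ↦ z - c) ∞ (volume.restrict (Metric.ball c ρ)) :=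
    memLp_top_of_bound (by fun_prop) ρ
      (ae_restrict_of_forall_mem measurableSet_ball fun z hz ↦ (mem_ball_iff_norm.1 hz).le)
  exact (hinv.mul_of_top_right (hsub.comp_fst μ)).mul_of_top_right
    (ha.ofReal.comp_snd (volume.restrict (Metric.ball c ρ)))

theorem integral_mul_max_eq_zero (h : HasBoundedRieszPotential μ l) (ha : MemLp a ∞ μ)
    (hf : cauchyTransform μ l a =ᵐ[volume] 0) (c : ℂ) {ρ : ℝ} (hρ : 0 < ρ) :
    ∫ t, a t * max (ρ ^ 2 - ‖l t - c‖ ^ 2) 0 ∂μ = 0 := by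
  have hzero : ∫ z in Metric.ball c ρ, ∫ t, (a t : ℂ) * ((z - c) / (z - l t)) ∂μ = 0 := by
    refine integral_eq_zero_of_ae (ae_restrict_of_ae ?_)
    filter_upwards [hf] with z hz
    calc ∫ t, (a t : ℂ) * ((z - c) / (z - l t)) ∂μ = (z - c) * cauchyTransform μ l a z := by
          rw [cauchyTransform, ← integral_const_mul]
          congr 1 with t
          rw [Complex.real_smul]; ring
      _ = 0 := mul_eq_zero_of_right _ hz
  rw [integral_integral_swap (f := fun z t ↦ (a t : ℂ) * ((z - c) / (z - l t)))
    (h.integrable_prod_restrict_ball ha c ρ)] at hzero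
  simp_rw [integral_const_mul, setIntegral_ball_sub_div_sub _ _ hρ, ← Complex.ofReal_mul,
    mul_left_comm _ π, integral_complex_ofReal, integral_const_mul] at hzero
  exact (mul_eq_zero.1 (Complex.ofReal_eq_zero.1 hzero)).resolve_left pi_ne_zero

end HasBoundedRieszPotential

theorem exists_le_norm_sub_of_mem_ball {T : Type*} {l : T → ℂ} {z : ℂ}
    (hz : z ∉ closure (range l)) :
    ∃ δ > 0, ∀ w ∈ Metric.ball z δ, ∀ t, δ ≤ ‖w - l t‖ := by
  obtain ⟨δ, hδ, hball⟩ := Metric.isOpen_iff.1 isClosed_closure.isOpen_compl z hz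
  refine ⟨δ / 2, half_pos hδ, fun w hw t ↦ ?_⟩
  by_contra! hlt
  have hmem : l t ∈ Metric.ball z δ := by
    rw [mem_ball_iff_norm] at hw ⊢
    rw [norm_sub_rev] at hlt
    linarith [norm_sub_le_norm_sub_add_norm_sub (l t) w z]
  exact hball hmem (subset_closure (mem_range_self t))

theorem hasFDerivAt_log_norm {z : ℂ} (hz : z ≠ 0) :
    HasFDerivAt (fun z : ℂ ↦ log ‖z‖) (Complex.reCLM ∘L ContinuousLinearMap.mul ℝ ℂ z⁻¹) z := by
  have hsq := ((hasFDerivAt_id (𝕜 := ℝ) z).norm_sq.log (by simpa using hz)).const_mul (2⁻¹ : ℝ)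
  convert! hsq using 1
  · ext z
    simp
  · ext
    simp [Complex.inv_re, Complex.inv_im, Complex.normSq_eq_norm_sq, Complex.inner]
    ring

section CauchyTransform

variable {T 𝕜 : Type*} [MeasurableSpace T] {μ : Measure T} {l : T → ℂ} [RCLike 𝕜]
  [NormedSpace 𝕜 ℂ] {a : T → 𝕜}

theorem continuousOn_cauchyTransform (hl : Measurable l) (ha : Integrable a μ) :
    ContinuousOn (cauchyTransform μ l a) (closure (range l))ᶜ := by
  intro z hz
  obtain ⟨δ, hδ, hdist⟩ := exists_le_norm_sub_of_mem_ball hz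
  refine ContinuousAt.continuousWithinAt (continuousAt_of_dominated
    (bound := fun t ↦ ‖a t‖ * δ⁻¹) ?_ ?_ (ha.norm.mul_const _) ?_)
  · exact Eventually.of_forall fun w ↦
      ha.1.smul (Measurable.aestronglyMeasurable (by fun_prop))
  · filter_upwards [Metric.ball_mem_nhds z hδ] with w hw
    refine Eventually.of_forall fun t ↦ ?_
    rw [norm_smul, norm_inv]
    gcongr
    exact hdist w hw t
  · refine Eventually.of_forall fun t ↦ ?_
    have hne : z - l t ≠ 0 := sub_ne_zero.2 fun heq ↦ hz (subset_closure ⟨t, heq.symm⟩)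
    fun_prop (disch := assumption)

theorem tendsto_cauchyTransform_cobounded (hl : Measurable l) {M : ℝ} (hM : ∀ t, ‖l t‖ ≤ M)
    (ha : Integrable a μ) :
    Tendsto (cauchyTransform μ l a) (Bornology.cobounded ℂ) (𝓝 0) := by
  have : (Bornology.cobounded ℂ).IsCountablyGenerated := by
    rw [← comap_norm_atTop]; infer_instance
  have hlim : Tendsto (fun z ↦ ∫ t, a t • (z - l t)⁻¹ ∂μ) (Bornology.cobounded ℂ)
      (𝓝 (∫ _, (0 : ℂ) ∂μ)) := by
    refine tendsto_integral_filter_of_dominated_convergence (fun t ↦ ‖a t‖) ?_ ?_ ha.norm ?_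
    · exact Eventually.of_forall fun w ↦
        ha.1.smul (Measurable.aestronglyMeasurable (by fun_prop))
    · filter_upwards [tendsto_norm_cobounded_atTop.eventually_ge_atTop (M + 1)] with z hz
      refine Eventually.of_forall fun t ↦ ?_
      rw [norm_smul, norm_inv]
      refine mul_le_of_le_one_right (norm_nonneg _) (inv_le_one_of_one_le₀ ?_)
      linarith [hM t, norm_sub_norm_le z (l t)]
    · refine Eventually.of_forall fun t ↦ ?_
      simpa using (tendsto_inv₀_cobounded.comp (tendsto_sub_const_cobounded (l t))).const_smul
        (a t)
  rwa [integral_zero] at hlim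

theorem HasBoundedRieszPotential.hasFDerivAt_logPotential [IsFiniteMeasure μ]
    (h : HasBoundedRieszPotential μ l) {b : T → ℝ} (hb : MemLp b ∞ μ) {z : ℂ}
    (hz : z ∉ closure (range l)) :
    HasFDerivAt (logPotential μ l b)
      (Complex.reCLM ∘L ContinuousLinearMap.mul ℝ ℂ (cauchyTransform μ l b z)) z := by
  have hl := h.measurable
  obtain ⟨δ, hδ, hdist⟩ := exists_le_norm_sub_of_mem_ball hz
  let Λ : ℂ →L[ℝ] ℂ →L[ℝ] ℝ :=
    ContinuousLinearMap.compL ℝ ℂ ℂ ℝ Complex.reCLM ∘L ContinuousLinearMap.mul ℝ ℂ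
  have hnorm {w : ℂ} (hw : w ∈ Metric.ball z δ) (t : T) :
      ‖b t • (w - l t)⁻¹‖ ≤ ‖b t‖ * δ⁻¹ := by
    rw [norm_smul, norm_inv]
    gcongr
    exact hdist w hw t
  have hbound : Integrable (fun t ↦ ‖b t‖ * δ⁻¹) μ := (hb.integrable le_top).norm.mul_const _
  have hmeas : AEStronglyMeasurable (fun t ↦ b t • (z - l t)⁻¹) μ :=
    hb.1.smul (Measurable.aestronglyMeasurable (by fun_prop))
  have hint : Integrable (fun t ↦ b t • (z - l t)⁻¹) μ :=
    hbound.mono' hmeas (Eventually.of_forall (hnorm (Metric.mem_ball_self hδ)))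
  have hderiv {w : ℂ} (hw : w ∈ Metric.ball z δ) (t : T) :
      HasFDerivAt (fun w ↦ b t * log ‖w - l t‖) (Λ (b t • (w - l t)⁻¹)) w := by
    have hne : w - l t ≠ 0 := norm_pos_iff.1 (hδ.trans_le (hdist w hw t))
    have hlog := (hasFDerivAt_log_norm hne).comp w ((hasFDerivAt_id (𝕜 := ℝ) w).sub_const (l t))
    convert! hlog.const_mul (b t) using 1
    ext
    simp [Λ]
    ring
  have hmain := hasFDerivAt_integral_of_dominated_of_fderiv_le (μ := μ)
    (F' := fun w t ↦ Λ (b t • (w - l t)⁻¹)) (Metric.ball_mem_nhds z hδ)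
    (Eventually.of_forall fun w ↦
      hb.1.mul (Measurable.aestronglyMeasurable (by fun_prop)))
    (h.integrable_mul_log_norm_sub hb z) (Λ.continuous.comp_aestronglyMeasurable hmeas)
    (Eventually.of_forall fun t w hw ↦ (Λ.le_opNorm _).trans
      (mul_le_mul_of_nonneg_left (hnorm hw t) (norm_nonneg Λ)))
    (hbound.const_mul ‖Λ‖) (Eventually.of_forall fun t w hw ↦ hderiv hw t)
  rwa [Λ.integral_comp_comm hint] at hmain

end CauchyTransform

/-! ### Winding numbers -/

section WindingNumber

variable {l : ℝ → ℂ} {L : ℝ}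

/-- The winding number about `z` of the loop `l` restricted to a period `[0, L]`, as the complex
number given by the Cauchy integral; for `z` off the loop it is an integer. -/
noncomputable def windingNumber (L : ℝ) (l : ℝ → ℂ) (z : ℂ) : ℂ :=
  (2 * π * Complex.I)⁻¹ * ∫ t in (0 : ℝ)..L, deriv l t / (l t - z)

theorem volume_range_eq_zero_of_differentiable (hl : Differentiable ℝ l) :
    volume (range l) = 0 := by
  have haxis : volume ((LinearMap.ker Complex.imLm : Submodule ℝ ℂ) : Set ℂ) = 0 := by
    refine Measure.addHaar_submodule _ _ fun htop ↦ ?_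
    have hI : Complex.I ∈ LinearMap.ker Complex.imLm := htop ▸ trivial
    simp at hI
  have himage := addHaar_image_eq_zero_of_differentiableOn_of_addHaar_eq_zero volume
    (f := fun z : ℂ ↦ l z.re)
    (fun z _ ↦ ((hl z.re).comp z Complex.reCLM.differentiableAt).differentiableWithinAt) haxis
  refine measure_mono_null ?_ himage
  rintro _ ⟨t, rfl⟩
  exact ⟨t, by simp, by simp⟩

theorem two_pi_mul_re_windingNumber (hl : ContDiff ℝ 1 l) {z : ℂ} (hz : z ∉ range l) :
    2 * π * (windingNumber L l z).re = ∫ t in (0 : ℝ)..L, (deriv l t / (l t - z)).im := by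
  have hquot : Continuous fun t ↦ deriv l t / (l t - z) :=
    hl.continuous_deriv_one.div (hl.continuous.sub continuous_const) fun t ↦
      sub_ne_zero.2 fun heq ↦ hz ⟨t, heq⟩
  have him := Complex.imCLM.intervalIntegral_comp_comm (μ := volume)
    (hquot.intervalIntegrable 0 L)
  have hfactor : (2 * π * Complex.I : ℂ)⁻¹ = ((2 * π)⁻¹ : ℝ) * -Complex.I := by
    push_cast
    rw [mul_inv, Complex.inv_I]
  simp only [Complex.imCLM_apply] at him
  rw [him, windingNumber, hfactor, mul_assoc (_ : ℂ), Complex.re_ofReal_mul, neg_mul,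
    Complex.neg_re, Complex.I_mul_re, neg_neg, mul_inv_cancel_left₀ two_pi_pos.ne']

theorem exists_windingNumber_eq_intCast (hl : ContDiff ℝ 1 l) (hloop : l L = l 0) {z : ℂ}
    (hz : z ∉ range l) : ∃ n : ℤ, windingNumber L l z = n := by
  have hne (t : ℝ) : l t - z ≠ 0 := sub_ne_zero.2 fun heq ↦ hz ⟨t, heq⟩
  have hquot : Continuous fun t ↦ deriv l t / (l t - z) :=
    hl.continuous_deriv_one.div (hl.continuous.sub continuous_const) hne
  let I (x : ℝ) : ℂ := ∫ t in (0 : ℝ)..x, deriv l t / (l t - z)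
  -- `exp (-I)` is the reciprocal of a continuous branch of `l - z` up to a constant factor
  have hderiv (x : ℝ) : HasDerivAt (fun x ↦ Complex.exp (-I x) * (l x - z)) 0 x := by
    have hI : HasDerivAt I (deriv l x / (l x - z)) x :=
      (hquot.integral_hasStrictDerivAt 0 x).hasDerivAt
    convert! hI.neg.cexp.mul (((hl.differentiable one_ne_zero) x).hasDerivAt.sub_const z) using 1
    field_simp [hne x]
    simp
  have hconst := is_const_of_deriv_eq_zero (fun x ↦ (hderiv x).differentiableAt)
    (fun x ↦ (hderiv x).deriv) L 0
  have hexp : Complex.exp (-I L) = 1 := by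
    simp only [hloop] at hconst
    simpa [I] using mul_right_cancel₀ (hne 0) hconst
  obtain ⟨n, hn⟩ := Complex.exp_eq_one_iff.1 hexp
  refine ⟨-n, ?_⟩
  have hIL : I L = -n * (2 * π * Complex.I) := by rw [neg_mul, ← hn, neg_neg]
  rw [windingNumber, show ∫ t in (0 : ℝ)..L, deriv l t / (l t - z) = I L from rfl, hIL]
  have := Complex.two_pi_I_ne_zero
  push_cast
  field_simp

theorem windingNumber_eq_cauchyTransform (hL : 0 ≤ L) (l : ℝ → ℂ) (z : ℂ) :
    windingNumber L l z =
      -(2 * π * Complex.I)⁻¹ * cauchyTransform (volume.restrict (Ioc 0 L)) l (deriv l) z := by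
  rw [windingNumber, cauchyTransform, intervalIntegral.integral_of_le hL, neg_mul, ← mul_neg,
    ← integral_neg]
  congr 2 with t
  rw [smul_eq_mul, ← mul_neg, ← inv_neg, neg_sub, div_eq_mul_inv]

theorem pairTransform_deriv_mul (hL : 0 ≤ L) (l : ℝ → ℂ) (a : ℝ → ℝ) (z : ℂ) :
    pairTransform (volume.restrict (Ioc 0 L)) l
        (fun p ↦ -(2 * π * Complex.I)⁻¹ * deriv l p.1 * a p.2) z =
      windingNumber L l z * cauchyTransform (volume.restrict (Ioc 0 L)) l a z := by
  rw [windingNumber_eq_cauchyTransform hL, pairTransform, cauchyTransform, cauchyTransform,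
    mul_assoc (-_), ← integral_prod_mul (fun t ↦ deriv l t • (z - l t)⁻¹) fun t ↦ a t • (z - l t)⁻¹,
    ← integral_const_mul]
  congr 1 with p
  rw [smul_eq_mul, Complex.real_smul, mul_inv (z - l p.1)]
  ring

theorem continuousOn_windingNumber (hL : 0 < L) (hl : ContDiff ℝ 1 l)
    (hper : Function.Periodic l L) : ContinuousOn (windingNumber L l) (range l)ᶜ := by
  have hclosed : IsClosed (range l) :=
    (hper.compact_of_continuous hL.ne' hl.continuous).isClosed
  have hcont := (continuousOn_cauchyTransform (μ := volume.restrict (Ioc 0 L))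
    hl.continuous.measurable hl.continuous_deriv_one.integrableOn_Ioc).const_smul
    (-(2 * π * Complex.I)⁻¹)
  rw [hclosed.closure_eq] at hcont
  exact hcont.congr fun z _ ↦ windingNumber_eq_cauchyTransform hL.le l z

theorem windingNumber_eq_of_isPreconnected (hL : 0 < L) (hl : ContDiff ℝ 1 l)
    (hper : Function.Periodic l L) {S : Set ℂ} (hS : IsPreconnected S)
    (hdisj : Disjoint S (range l)) {z w : ℂ} (hz : z ∈ S) (hw : w ∈ S) :
    windingNumber L l z = windingNumber L l w := by
  refine hS.constant_of_mapsTo Complex.isClosedEmbedding_intCast.isEmbedding.isDiscrete_range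
    ((continuousOn_windingNumber hL hl hper).mono hdisj.subset_compl_right) (fun x hx ↦ ?_) hz hw
  obtain ⟨n, hn⟩ := exists_windingNumber_eq_intCast hl hper.eq
    (hdisj.notMem_of_mem_left hx)
  exact ⟨n, hn.symm⟩

theorem exists_windingNumber_eq_zero (hL : 0 < L) (hl : ContDiff ℝ 1 l)
    (hper : Function.Periodic l L) : ∃ z ∉ range l, windingNumber L l z = 0 := by
  obtain ⟨M, hM⟩ := (hper.isBounded_of_continuous hL.ne' hl.continuous).exists_norm_le
  have hlim : Tendsto (windingNumber L l) (Bornology.cobounded ℂ) (𝓝 0) := by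
    have := (tendsto_cauchyTransform_cobounded (μ := volume.restrict (Ioc 0 L))
      hl.continuous.measurable (fun t ↦ hM _ (mem_range_self t))
      hl.continuous_deriv_one.integrableOn_Ioc).const_mul (-(2 * π * Complex.I)⁻¹)
    simpa only [← windingNumber_eq_cauchyTransform hL.le, mul_zero] using this
  obtain ⟨z, hsmall, hlarge⟩ := ((hlim.eventually (Metric.ball_mem_nhds 0 one_pos)).and
    (tendsto_norm_cobounded_atTop.eventually_gt_atTop M)).exists
  have hz : z ∉ range l := fun hz ↦ (hM z hz).not_gt hlarge
  obtain ⟨n, hn⟩ := exists_windingNumber_eq_intCast hl hper.eq hz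
  refine ⟨z, hz, ?_⟩
  rw [dist_zero_right, hn, Complex.norm_intCast] at hsmall
  have hn₀ : n = 0 := Int.abs_lt_one_iff.1 (mod_cast hsmall)
  rw [hn, hn₀, Int.cast_zero]

end WindingNumber

/-! ### Periodic functions and calculus on the line -/

theorem periodic_deriv {E : Type*} [NormedAddCommGroup E] [NormedSpace ℝ E] {f : ℝ → E} {c : ℝ}
    (hf : Function.Periodic f c) : Function.Periodic (deriv f) c := fun s ↦ by
  rw [← deriv_comp_add_const, hf.funext]

theorem exists_abs_le_half_period {α : Type*} {f : ℝ → α} {c : ℝ} (hf : Function.Periodic f c)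
    (hc : 0 < c) (s t : ℝ) : ∃ x, |x| ≤ c / 2 ∧ f (s + x) = f t := by
  obtain ⟨y, hy, hfy⟩ := hf.exists_mem_Ico hc t (s - c / 2)
  refine ⟨y - s, abs_le.2 ⟨by linarith [hy.1], by linarith [hy.2]⟩, ?_⟩
  rw [add_sub_cancel, hfy]

theorem intervalIntegral_eq_integral_symmetric {E : Type*} [NormedAddCommGroup E]
    [NormedSpace ℝ E] {f : ℝ → E} {c : ℝ} (hf : Function.Periodic f c) (s : ℝ) :
    ∫ t in (0 : ℝ)..c, f t = ∫ x in (-(c / 2))..(c / 2), f (s + x) := by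
  have hshift := hf.intervalIntegral_add_eq 0 (s + -(c / 2))
  rw [zero_add] at hshift
  rw [intervalIntegral.integral_comp_add_left f, hshift]
  ring_nf

theorem setLIntegral_eq_setLIntegral_symmetric {f : ℝ → ℝ≥0∞} {c : ℝ}
    (hf : Function.Periodic f c) (hc : 0 < c) (s : ℝ) :
    ∫⁻ t in Ioc 0 c, f t = ∫⁻ x in Ioc (-(c / 2)) (c / 2), f (s + x) := by
  have hshift := (isAddFundamentalDomain_Ioc hc 0).setLIntegral_eq
    (isAddFundamentalDomain_Ioc hc (s - c / 2)) f fun g t ↦ hf.map_vadd_zmultiples g t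
  rw [zero_add] at hshift
  rw [hshift, ← (measurePreserving_add_left volume s).setLIntegral_comp_preimage_emb
    (measurableEmbedding_addLeft s), preimage_const_add_Ioc]
  ring_nf

theorem norm_add_sub_sub_smul_deriv_le {E : Type*} [NormedAddCommGroup E] [NormedSpace ℝ E]
    {f : ℝ → E} {K : NNReal} (hf : Differentiable ℝ f) (hK : LipschitzWith K (deriv f)) (s x : ℝ) :
    ‖f (s + x) - f s - x • deriv f s‖ ≤ K * |x| ^ 2 := by
  have hderiv (t : ℝ) : HasDerivAt (fun t : ℝ ↦ f t - t • deriv f s) (deriv f t - deriv f s) t := by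
    simpa using! (hf t).hasDerivAt.sub ((hasDerivAt_id t).smul_const (deriv f s))
  have hbound : ∀ t ∈ uIcc s (s + x), ‖deriv f t - deriv f s‖ ≤ K * |x| := fun t ht ↦ by
    have := hK.norm_sub_le t s
    have habs : |t - s| ≤ |x| := by simpa using abs_sub_left_of_mem_uIcc ht
    rw [Real.norm_eq_abs] at this
    exact this.trans (by gcongr)
  have hmean := (convex_uIcc s (s + x)).norm_image_sub_le_of_norm_hasDerivWithin_le
    (fun t _ ↦ (hderiv t).hasDerivWithinAt) hbound left_mem_uIcc right_mem_uIcc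
  calc ‖f (s + x) - f s - x • deriv f s‖
      = ‖f (s + x) - (s + x) • deriv f s - (f s - s • deriv f s)‖ := by
        congr 1
        module
    _ ≤ K * |x| * ‖s + x - s‖ := hmean
    _ = K * |x| ^ 2 := by
        rw [add_sub_cancel_left, Real.norm_eq_abs]
        ring

theorem memLp_top_restrict_Ioc {E : Type*} [NormedAddCommGroup E] {f : ℝ → E} (hf : Continuous f)
    (a b : ℝ) : MemLp f ∞ (volume.restrict (Ioc a b)) := by
  obtain ⟨C, hC⟩ := isCompact_Icc.exists_bound_of_continuousOn (s := Icc a b) hf.continuousOn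
  exact memLp_top_of_bound hf.aestronglyMeasurable C
    ((ae_restrict_mem measurableSet_Ioc).mono fun t ht ↦ hC t (Ioc_subset_Icc_self ht))

theorem add_mul_I_ne_zero {x ε : ℝ} (hne : x ≠ 0 ∨ ε ≠ 0) : (x + ε * Complex.I : ℂ) ≠ 0 := by
  rw [Ne, Complex.ext_iff]
  simpa using not_and_or.2 hne

theorem integral_im_inv_add_mul_I {ε : ℝ} (hε : ε ≠ 0) (r : ℝ) :
    ∫ x in (-r)..r, (x + ε * Complex.I : ℂ)⁻¹.im = -2 * arctan (r * ε⁻¹) := by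
  have him (x : ℝ) : (x + ε * Complex.I : ℂ)⁻¹.im = -ε / (x ^ 2 + ε ^ 2) := by
    rw [Complex.inv_im]
    simp [Complex.normSq_apply, sq]
  have hpos (x : ℝ) : 0 < x ^ 2 + ε ^ 2 := by positivity
  have hderiv (x : ℝ) : HasDerivAt (fun x ↦ -arctan (x * ε⁻¹)) (-ε / (x ^ 2 + ε ^ 2)) x := by
    convert! ((hasDerivAt_id x).mul_const ε⁻¹).arctan.neg using 1
    have := hpos x
    simp only [id]
    field_simp
    ring
  simp only [him]
  rw [intervalIntegral.integral_eq_sub_of_hasDerivAt (fun x _ ↦ hderiv x)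
    (Continuous.intervalIntegrable (by fun_prop (disch := exact fun x ↦ (hpos x).ne')) _ _),
    neg_mul, arctan_neg]
  ring

/-! ### Loops parametrized by arc length -/

/-- A simple closed plane curve of class `C²` and length `L`, parametrized by arc length over `ℝ`
with period `L`. -/
structure IsArcLengthLoop (L : ℝ) (l : ℝ → ℂ) : Prop where
  pos : 0 < L
  contDiff : ContDiff ℝ 2 l
  periodic : Function.Periodic l L
  norm_deriv : ∀ s, ‖deriv l s‖ = 1
  injOn : InjOn l (Ico 0 L)

/-- The curve at signed distance `ε` from a unit speed curve `l`, to the right of `l` for `ε > 0`: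
the normal used for the double layer kernel is `-i l'`. -/
noncomputable def parallelCurve (l : ℝ → ℂ) (s ε : ℝ) : ℂ := l s - ε * Complex.I * deriv l s

/-- The Cauchy kernel of the curve minus that of its tangent line at `l s`, both seen from the
point `parallelCurve l s ε`. The two singularities at `x = ε = 0` cancel. -/
noncomputable def tangentCorrection (l : ℝ → ℂ) (s ε x : ℝ) : ℂ :=
  deriv l (s + x) / (l (s + x) - parallelCurve l s ε) - (x + ε * Complex.I)⁻¹

/-- The kernel `∂ arg (l s - l t) / ∂s` of a curve `l`. It agrees with the double layer kernel off
the diagonal, and its value on the diagonal is irrelevant. -/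
noncomputable def angularKernel (l : ℝ → ℂ) (s t : ℝ) : ℝ := (deriv l s / (l s - l t)).im

theorem KA_eq_angularKernel {l : ℝ → ℂ} {s t : ℝ} (hst : l s ≠ l t) :
    KA l s t = angularKernel l s t := by
  rw [KA, if_neg hst, angularKernel, Complex.div_im, dotR, normalv, Complex.normSq_eq_norm_sq]
  simp
  ring

/-- The double layer operator of a curve `l` with period `L`, acting on real densities. -/
noncomputable def doubleLayerOperator (L : ℝ) (l : ℝ → ℂ) (a : ℝ → ℝ) (s : ℝ) : ℝ :=
  ∫ t in (0 : ℝ)..L, angularKernel l s t * a t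

namespace IsArcLengthLoop

variable {L : ℝ} {l : ℝ → ℂ}

theorem differentiable (h : IsArcLengthLoop L l) : Differentiable ℝ l :=
  h.contDiff.differentiable two_ne_zero

theorem continuous (h : IsArcLengthLoop L l) : Continuous l := h.contDiff.continuous

theorem isClosed_range (h : IsArcLengthLoop L l) : IsClosed (range l) :=
  (h.periodic.compact_of_continuous h.pos.ne' h.continuous).isClosed

theorem contDiff_deriv (h : IsArcLengthLoop L l) : ContDiff ℝ 1 (deriv l) :=
  ContDiff.deriv' (n := 1) (by simpa only [one_add_one_eq_two] using h.contDiff)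

theorem continuous_deriv (h : IsArcLengthLoop L l) : Continuous (deriv l) :=
  h.contDiff_deriv.continuous

theorem deriv_ne_zero (h : IsArcLengthLoop L l) (s : ℝ) : deriv l s ≠ 0 :=
  norm_ne_zero_iff.1 (h.norm_deriv s ▸ one_ne_zero)

theorem exists_lipschitzWith_deriv (h : IsArcLengthLoop L l) :
    ∃ K, LipschitzWith K (deriv l) := by
  obtain ⟨K, hK⟩ := ((periodic_deriv (periodic_deriv h.periodic)).isBounded_of_continuous
    h.pos.ne' h.contDiff_deriv.continuous_deriv_one).exists_norm_le
  refine ⟨K.toNNReal, lipschitzWith_of_nnnorm_deriv_le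
    (h.contDiff_deriv.differentiable one_ne_zero) fun t ↦ ?_⟩
  exact NNReal.le_toNNReal_of_coe_le (hK _ (mem_range_self t))

theorem add_ne (h : IsArcLengthLoop L l) (s : ℝ) {x : ℝ} (hx : x ≠ 0) (hxL : |x| < L) :
    l (s + x) ≠ l s := fun heq ↦ by
  have hmod (t : ℝ) : l (toIcoMod h.pos 0 t) = l t := by
    rw [toIcoMod, h.periodic.sub_zsmul_eq]
  have hmem (t : ℝ) : toIcoMod h.pos 0 t ∈ Ico 0 L := by
    simpa using toIcoMod_mem_Ico h.pos 0 t
  obtain ⟨n, hn⟩ := (toIcoMod_eq_toIcoMod h.pos).1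
    (h.injOn (hmem s) (hmem (s + x)) (by rw [hmod, hmod, heq]))
  rw [add_sub_cancel_left, zsmul_eq_mul] at hn
  have hn₀ : n = 0 := by
    rw [hn, abs_mul, abs_of_pos h.pos, mul_lt_iff_lt_one_left h.pos] at hxL
    exact Int.abs_lt_one_iff.1 (mod_cast hxL)
  simp [hn, hn₀] at hx

theorem exists_half_norm_le_norm_sub_parallelCurve (h : IsArcLengthLoop L l) :
    ∃ δ > 0, ∀ s x ε : ℝ, |x| ≤ δ →
      ‖x + ε * Complex.I‖ / 2 ≤ ‖l (s + x) - parallelCurve l s ε‖ := by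
  obtain ⟨K, hK⟩ := h.exists_lipschitzWith_deriv
  refine ⟨1 / (2 * (K + 1)), by positivity, fun s x ε hx ↦ ?_⟩
  have htaylor := norm_add_sub_sub_smul_deriv_le h.differentiable hK s x
  have hsplit : l (s + x) - parallelCurve l s ε =
      (x + ε * Complex.I) * deriv l s + (l (s + x) - l s - x • deriv l s) := by
    rw [parallelCurve, Complex.real_smul]
    ring
  have htriangle := norm_sub_norm_le ((x + ε * Complex.I) * deriv l s)
    (-(l (s + x) - l s - x • deriv l s))
  rw [norm_neg, sub_neg_eq_add, ← hsplit, norm_mul, h.norm_deriv, mul_one] at htriangle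
  have hre : |x| ≤ ‖x + ε * Complex.I‖ := by
    simpa using Complex.abs_re_le_norm (x + ε * Complex.I)
  have hquad : K * |x| ^ 2 ≤ |x| / 2 := by
    have hKx : (K + 1) * |x| ≤ 1 / 2 := by
      rw [le_div_iff₀ (by positivity)] at hx
      linarith
    nlinarith [abs_nonneg x]
  linarith

theorem exists_le_norm_add_sub (h : IsArcLengthLoop L l) {δ : ℝ} (hδ : 0 < δ) :
    ∃ m > 0, ∀ s x : ℝ, δ ≤ |x| → |x| ≤ L / 2 → m ≤ ‖l (s + x) - l s‖ := by
  let S : Set (ℝ × ℝ) := Icc 0 L ×ˢ {x | δ ≤ |x| ∧ |x| ≤ L / 2}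
  have hS : IsCompact S := isCompact_Icc.prod <|
    (isCompact_Icc (a := -(L / 2)) (b := L / 2)).of_isClosed_subset
      ((isClosed_le continuous_const continuous_abs).inter
        (isClosed_le continuous_abs continuous_const)) fun x hx ↦ abs_le.1 hx.2
  have hcont : Continuous fun p : ℝ × ℝ ↦ ‖l (p.1 + p.2) - l p.1‖ := by
    have := h.continuous
    fun_prop
  obtain ⟨m, hm, hle⟩ := hS.exists_forall_le' hcont.continuousOn (a := 0) fun p hp ↦
    norm_pos_iff.2 <| sub_ne_zero.2 <| h.add_ne p.1
      (abs_pos.1 (hδ.trans_le hp.2.1)) (by linarith [hp.2.2, h.pos])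
  refine ⟨m, hm, fun s x hδx hxL ↦ ?_⟩
  have hper : Function.Periodic (fun s ↦ ‖l (s + x) - l s‖) L := fun s ↦ by
    simp only [add_right_comm s L x, h.periodic _]
  obtain ⟨y, hy, hsy⟩ := hper.exists_mem_Ico₀ h.pos s
  exact (hle (y, x) ⟨Ico_subset_Icc_self hy, hδx, hxL⟩).trans_eq hsy.symm

theorem exists_mul_norm_le_norm_sub_parallelCurve (h : IsArcLengthLoop L l) :
    ∃ c > 0, ∃ ε₀ > 0, ∀ s x ε : ℝ, |x| ≤ L / 2 → |ε| ≤ ε₀ →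
      c * ‖x + ε * Complex.I‖ ≤ ‖l (s + x) - parallelCurve l s ε‖ := by
  obtain ⟨δ, hδ, hnear⟩ := h.exists_half_norm_le_norm_sub_parallelCurve
  obtain ⟨m, hm, hfar⟩ := h.exists_le_norm_add_sub hδ
  have hL := h.pos
  refine ⟨min (1 / 2) (m / 2 / (L / 2 + m / 2)), by positivity, m / 2, by positivity,
    fun s x ε hx hε ↦ ?_⟩
  rcases le_total |x| δ with hxδ | hxδ
  · refine (mul_le_mul_of_nonneg_right (min_le_left _ _) (norm_nonneg _)).trans ?_
    linarith [hnear s x ε hxδ]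
  have hdist : m ≤ ‖l (s + x) - parallelCurve l s ε‖ + |ε| := by
    have hsplit : l (s + x) - l s =
        l (s + x) - parallelCurve l s ε - ε * Complex.I * deriv l s := by
      rw [parallelCurve]
      ring
    have htriangle := norm_sub_le (l (s + x) - parallelCurve l s ε) (ε * Complex.I * deriv l s)
    rw [← hsplit, norm_mul, norm_mul, h.norm_deriv, Complex.norm_I, mul_one, mul_one,
      Complex.norm_real, Real.norm_eq_abs] at htriangle
    exact (hfar s x hxδ hx).trans htriangle
  have hnorm : ‖x + ε * Complex.I‖ ≤ L / 2 + m / 2 := by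
    refine (norm_add_le _ _).trans ?_
    rw [norm_mul, Complex.norm_I, mul_one, Complex.norm_real, Complex.norm_real]
    exact add_le_add hx hε
  calc min (1 / 2) (m / 2 / (L / 2 + m / 2)) * ‖x + ε * Complex.I‖
      ≤ m / 2 / (L / 2 + m / 2) * (L / 2 + m / 2) := by
        gcongr
        exact min_le_right _ _
    _ = m / 2 := by field_simp
    _ ≤ _ := by linarith

theorem exists_norm_tangentCorrection_le (h : IsArcLengthLoop L l) :
    ∃ ε₀ > 0, ∃ C, ∀ s x ε : ℝ, |x| ≤ L / 2 → |ε| ≤ ε₀ → (x ≠ 0 ∨ ε ≠ 0) →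
      l (s + x) - parallelCurve l s ε ≠ 0 ∧ ‖tangentCorrection l s ε x‖ ≤ C := by
  obtain ⟨c, hc, ε₀, hε₀, hchord⟩ := h.exists_mul_norm_le_norm_sub_parallelCurve
  obtain ⟨K, hK⟩ := h.exists_lipschitzWith_deriv
  refine ⟨ε₀, hε₀, 2 * K / c, fun s x ε hx hε hne ↦ ?_⟩
  have hchord := hchord s x ε hx hε
  set q : ℂ := x + ε * Complex.I with hq
  set d : ℂ := l (s + x) - parallelCurve l s ε with hd
  have hq₀ : q ≠ 0 := add_mul_I_ne_zero hne
  have hq_pos : 0 < ‖q‖ := norm_pos_iff.2 hq₀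
  have hd₀ : d ≠ 0 := norm_pos_iff.1 ((mul_pos hc hq_pos).trans_le hchord)
  have hquot : tangentCorrection l s ε x = (deriv l (s + x) * q - d) / (d * q) := by
    rw [tangentCorrection, ← hq, ← hd]
    field_simp
  have hxq : |x| ≤ ‖q‖ := by simpa [hq] using Complex.abs_re_le_norm q
  have hnum : ‖deriv l (s + x) * q - d‖ ≤ 2 * K * ‖q‖ ^ 2 := by
    have hsplit : deriv l (s + x) * q - d =
        (deriv l (s + x) - deriv l s) * q - (l (s + x) - l s - x • deriv l s) := by
      rw [hd, hq, parallelCurve, Complex.real_smul]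
      ring
    have hlip : ‖deriv l (s + x) - deriv l s‖ ≤ K * |x| := by
      simpa using hK.norm_sub_le (s + x) s
    calc ‖deriv l (s + x) * q - d‖ ≤ K * |x| * ‖q‖ + K * |x| ^ 2 := by
          rw [hsplit]
          refine (norm_sub_le _ _).trans (add_le_add ?_
            (norm_add_sub_sub_smul_deriv_le h.differentiable hK s x))
          rw [norm_mul]
          gcongr
      _ ≤ K * ‖q‖ * ‖q‖ + K * ‖q‖ ^ 2 := by gcongr
      _ = 2 * K * ‖q‖ ^ 2 := by ring
  refine ⟨hd₀, ?_⟩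
  rw [hquot, norm_div, norm_mul, div_le_iff₀ (by positivity)]
  calc ‖deriv l (s + x) * q - d‖ ≤ 2 * K / c * (c * ‖q‖ * ‖q‖) := hnum.trans_eq (by field_simp)
    _ ≤ 2 * K / c * (‖d‖ * ‖q‖) := by gcongr

theorem exists_forall_norm_sub_le (h : IsArcLengthLoop L l) (z : ℂ) :
    ∃ s, ∀ t, ‖l s - z‖ ≤ ‖l t - z‖ := by
  obtain ⟨_, ⟨s, rfl⟩, hs⟩ := (h.periodic.compact_of_continuous h.pos.ne'
    h.continuous).exists_isMinOn (range_nonempty l) (f := fun w ↦ ‖w - z‖) (by fun_prop)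
  exact ⟨s, fun t ↦ hs (mem_range_self t)⟩

theorem exists_mul_abs_le_norm_sub (h : IsArcLengthLoop L l) :
    ∃ c > 0, ∀ z, ∃ s, ∀ x, |x| ≤ L / 2 → c * |x| ≤ ‖z - l (s + x)‖ := by
  obtain ⟨c, hc, ε₀, hε₀, hchord⟩ := h.exists_mul_norm_le_norm_sub_parallelCurve
  refine ⟨c / 2, by positivity, fun z ↦ ?_⟩
  obtain ⟨s, hs⟩ := h.exists_forall_norm_sub_le z
  refine ⟨s, fun x hx ↦ ?_⟩
  have harc : c * |x| ≤ ‖l (s + x) - l s‖ := by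
    simpa [parallelCurve] using hchord s x 0 hx (by simpa using hε₀.le)
  have htriangle := norm_sub_le_norm_sub_add_norm_sub (l (s + x)) z (l s)
  have hnearest := hs (s + x)
  rw [norm_sub_rev z (l s)] at htriangle
  rw [norm_sub_rev z]
  linarith

theorem hasBoundedRieszPotential (h : IsArcLengthLoop L l) :
    HasBoundedRieszPotential (volume.restrict (Ioc 0 L)) l := by
  obtain ⟨c, hc, hchord⟩ := h.exists_mul_abs_le_norm_sub
  obtain ⟨C, hC, hle⟩ := exists_setLIntegral_inv_enorm_sub_rpow_le (volume : Measure ℝ)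
    (S := Ioc (-(L / 2)) (L / 2)) (by simp) (q := 3 / 4) (by norm_num)
    (by norm_num [Module.finrank_self])
  obtain ⟨M, hM⟩ := (h.periodic.isBounded_of_continuous h.pos.ne' h.continuous).exists_norm_le
  refine ⟨h.continuous.measurable, ⟨M, fun t ↦ hM _ (mem_range_self t)⟩,
    (ENNReal.ofReal c)⁻¹ ^ (3 / 4 : ℝ) * C,
    ENNReal.mul_lt_top (ENNReal.rpow_lt_top_of_nonneg (by norm_num) (by simp [hc])) hC,
    fun z ↦ ?_⟩
  obtain ⟨s, hs⟩ := hchord z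
  have hbound : ∀ x ∈ Ioc (-(L / 2)) (L / 2), ‖z - l (s + x)‖ₑ⁻¹ ^ (3 / 4 : ℝ) ≤
      (ENNReal.ofReal c)⁻¹ ^ (3 / 4 : ℝ) * ‖x - 0‖ₑ⁻¹ ^ (3 / 4 : ℝ) := fun x hx ↦ by
    have hle : ENNReal.ofReal c * ‖x - 0‖ₑ ≤ ‖z - l (s + x)‖ₑ := by
      rw [← ofReal_norm, ← ofReal_norm, ← ENNReal.ofReal_mul (by positivity)]
      rw [sub_zero]
      exact ENNReal.ofReal_le_ofReal (hs x (abs_le.2 ⟨hx.1.le, hx.2⟩))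
    rw [← ENNReal.mul_rpow_of_nonneg _ _ (by norm_num),
      ← ENNReal.mul_inv (by simp [hc]) (by simp)]
    gcongr
  have hper : Function.Periodic (fun t ↦ ‖z - l t‖ₑ⁻¹ ^ (3 / 4 : ℝ)) L := fun t ↦ by
    simp only [h.periodic t]
  calc ∫⁻ t in Ioc 0 L, ‖z - l t‖ₑ⁻¹ ^ (3 / 4 : ℝ)
      = ∫⁻ x in Ioc (-(L / 2)) (L / 2), ‖z - l (s + x)‖ₑ⁻¹ ^ (3 / 4 : ℝ) :=
        setLIntegral_eq_setLIntegral_symmetric hper h.pos s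
    _ ≤ ∫⁻ x in Ioc (-(L / 2)) (L / 2), (ENNReal.ofReal c)⁻¹ ^ (3 / 4 : ℝ) *
          ‖x - 0‖ₑ⁻¹ ^ (3 / 4 : ℝ) := setLIntegral_mono' measurableSet_Ioc hbound
    _ ≤ (ENNReal.ofReal c)⁻¹ ^ (3 / 4 : ℝ) * C := by
        rw [lintegral_const_mul _ (by fun_prop)]
        gcongr
        exact hle 0

theorem exists_eq_parallelCurve (h : IsArcLengthLoop L l) {z : ℂ} {s : ℝ}
    (hs : ∀ t, ‖l s - z‖ ≤ ‖l t - z‖) : ∃ ε : ℝ, z = parallelCurve l s ε := by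
  have hd := h.deriv_ne_zero s
  have hderiv : HasDerivAt (fun t ↦ ‖l t - z‖ ^ 2) (2 * inner ℝ (l s - z) (deriv l s)) s :=
    ((h.differentiable s).hasDerivAt.sub_const z).norm_sq
  have hmin : IsLocalMin (fun t ↦ ‖l t - z‖ ^ 2) s :=
    Eventually.of_forall fun t ↦ pow_le_pow_left₀ (norm_nonneg _) (hs t) 2
  have horth : ((l s - z) / deriv l s).re = 0 := by
    have hzero := hmin.hasDerivAt_eq_zero hderiv
    have hnorm : Complex.normSq (deriv l s) = 1 := by
      rw [Complex.normSq_eq_norm_sq, h.norm_deriv, one_pow]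
    simp only [Complex.inner, Complex.mul_re, Complex.conj_re, Complex.conj_im] at hzero
    rw [Complex.div_re, hnorm]
    linarith
  refine ⟨((l s - z) / deriv l s).im, ?_⟩
  have hquot : (l s - z) / deriv l s = ((l s - z) / deriv l s).im * Complex.I :=
    Complex.ext (by simpa using horth) (by simp)
  rw [parallelCurve, ← hquot, div_mul_cancel₀ _ hd, sub_sub_cancel]

theorem continuousAt_integral_im_tangentCorrection (h : IsArcLengthLoop L l) (s : ℝ) :
    ContinuousAt (fun ε ↦ ∫ x in (-(L / 2))..(L / 2), (tangentCorrection l s ε x).im) 0 := by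
  obtain ⟨ε₀, hε₀, C, hbound⟩ := h.exists_norm_tangentCorrection_le
  have hl := h.continuous
  have hmeas := hl.measurable
  have habs {x : ℝ} (hx : x ∈ uIoc (-(L / 2)) (L / 2)) : |x| ≤ L / 2 := by
    rw [uIoc_of_le (by linarith [h.pos])] at hx
    exact abs_le.2 ⟨hx.1.le, hx.2⟩
  refine intervalIntegral.continuousAt_of_dominated_interval (bound := fun _ ↦ C)
    (Eventually.of_forall fun ε ↦ Measurable.aestronglyMeasurable ?_) ?_ (by simp) ?_
  · unfold tangentCorrection
    fun_prop
  · filter_upwards [Icc_mem_nhds (neg_neg_of_pos hε₀) hε₀] with ε hε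
    filter_upwards [Measure.ae_ne volume 0] with x hx₀ hx
    exact (Complex.abs_im_le_norm _).trans
      (hbound s x ε (habs hx) (abs_le.2 hε) (.inl hx₀)).2
  · filter_upwards [Measure.ae_ne volume 0] with x hx₀ hx
    have hne := (hbound s x 0 (habs hx) (by simpa using hε₀.le) (.inl hx₀)).1
    have hne' : (x + (0 : ℝ) * Complex.I : ℂ) ≠ 0 := add_mul_I_ne_zero (.inl hx₀)
    unfold parallelCurve at hne
    unfold tangentCorrection parallelCurve
    refine Complex.continuous_im.continuousAt.comp ?_
    fun_prop (disch := assumption)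

theorem integral_im_tangentCorrection_zero (h : IsArcLengthLoop L l) (s : ℝ) :
    ∫ x in (-(L / 2))..(L / 2), (tangentCorrection l s 0 x).im =
      ∫ t in (0 : ℝ)..L, (deriv l t / (l t - l s)).im := by
  have hper : Function.Periodic (fun t ↦ (deriv l t / (l t - l s)).im) L := fun t ↦ by
    simp only [h.periodic t, periodic_deriv h.periodic t]
  rw [intervalIntegral_eq_integral_symmetric hper s]
  congr 1 with x
  simp [tangentCorrection, parallelCurve, ← Complex.ofReal_inv]

theorem two_pi_mul_re_windingNumber_parallelCurve (h : IsArcLengthLoop L l) {s ε : ℝ}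
    (hε : ε ≠ 0) (hoff : parallelCurve l s ε ∉ range l) :
    2 * π * (windingNumber L l (parallelCurve l s ε)).re =
      (∫ x in (-(L / 2))..(L / 2), (tangentCorrection l s ε x).im) -
        2 * arctan (L / 2 * ε⁻¹) := by
  have hl := h.continuous
  have hl' := h.continuous_deriv
  have hper : Function.Periodic
      (fun t ↦ (deriv l t / (l t - parallelCurve l s ε)).im) L := fun t ↦ by
    simp only [h.periodic t, periodic_deriv h.periodic t]
  have hcurve : Continuous fun x ↦ (deriv l (s + x) / (l (s + x) - parallelCurve l s ε)).im :=
    Complex.continuous_im.comp <| .div (by fun_prop) (by fun_prop) fun x ↦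
      sub_ne_zero.2 fun heq ↦ hoff ⟨_, heq⟩
  have hline : Continuous fun x : ℝ ↦ (x + ε * Complex.I : ℂ)⁻¹.im :=
    Complex.continuous_im.comp <| .inv₀ (by fun_prop) fun x ↦ add_mul_I_ne_zero (.inr hε)
  rw [two_pi_mul_re_windingNumber (h.contDiff.of_le one_le_two) hoff,
    intervalIntegral_eq_integral_symmetric hper s]
  simp only [tangentCorrection, Complex.sub_im]
  rw [intervalIntegral.integral_sub (hcurve.intervalIntegrable _ _)
    (hline.intervalIntegrable _ _), integral_im_inv_add_mul_I hε]
  ring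

theorem tendsto_re_windingNumber_parallelCurve (h : IsArcLengthLoop L l) (s : ℝ) {F : Filter ℝ}
    (hF : F ≤ 𝓝[≠] 0) (hoff : ∀ᶠ ε in F, parallelCurve l s ε ∉ range l) {θ : ℝ}
    (hθ : Tendsto (fun ε ↦ arctan (L / 2 * ε⁻¹)) F (𝓝 θ)) :
    Tendsto (fun ε ↦ 2 * π * (windingNumber L l (parallelCurve l s ε)).re) F
      (𝓝 ((∫ t in (0 : ℝ)..L, (deriv l t / (l t - l s)).im) - 2 * θ)) := by
  have hcorr := (h.continuousAt_integral_im_tangentCorrection s).tendsto.mono_left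
    (hF.trans nhdsWithin_le_nhds)
  rw [h.integral_im_tangentCorrection_zero] at hcorr
  refine (hcorr.sub (hθ.const_mul 2)).congr' ?_
  filter_upwards [hoff, hF self_mem_nhdsWithin] with ε hε hε₀
  exact (h.two_pi_mul_re_windingNumber_parallelCurve hε₀ hε).symm

theorem two_pi_mul_re_eq_of_eventually_nhdsGT (h : IsArcLengthLoop L l) (s : ℝ) {w : ℂ}
    (hw : ∀ᶠ ε in 𝓝[>] 0, parallelCurve l s ε ∉ range l ∧
      windingNumber L l (parallelCurve l s ε) = w) :
    2 * π * w.re = (∫ t in (0 : ℝ)..L, (deriv l t / (l t - l s)).im) - π := by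
  have harctan : Tendsto (fun ε ↦ arctan (L / 2 * ε⁻¹)) (𝓝[>] 0) (𝓝 (π / 2)) :=
    (tendsto_arctan_atTop.mono_right nhdsWithin_le_nhds).comp
      (tendsto_inv_nhdsGT_zero.const_mul_atTop (half_pos h.pos))
  have hlim := h.tendsto_re_windingNumber_parallelCurve s (nhdsGT_le_nhdsNE 0)
    (hw.mono fun _ hε ↦ hε.1) harctan
  rw [mul_div_cancel₀ _ two_ne_zero] at hlim
  exact tendsto_nhds_unique (tendsto_const_nhds.congr' (hw.mono fun ε hε ↦ by rw [hε.2])) hlim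

theorem two_pi_mul_re_eq_of_eventually_nhdsLT (h : IsArcLengthLoop L l) (s : ℝ) {w : ℂ}
    (hw : ∀ᶠ ε in 𝓝[<] 0, parallelCurve l s ε ∉ range l ∧
      windingNumber L l (parallelCurve l s ε) = w) :
    2 * π * w.re = (∫ t in (0 : ℝ)..L, (deriv l t / (l t - l s)).im) + π := by
  have harctan : Tendsto (fun ε ↦ arctan (L / 2 * ε⁻¹)) (𝓝[<] 0) (𝓝 (-(π / 2))) :=
    (tendsto_arctan_atBot.mono_right nhdsWithin_le_nhds).comp
      (tendsto_inv_nhdsLT_zero.const_mul_atBot (half_pos h.pos))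
  have hlim := h.tendsto_re_windingNumber_parallelCurve s (nhdsLT_le_nhdsNE 0)
    (hw.mono fun _ hε ↦ hε.1) harctan
  rw [mul_neg, mul_div_cancel₀ _ two_ne_zero, sub_neg_eq_add] at hlim
  exact tendsto_nhds_unique (tendsto_const_nhds.congr' (hw.mono fun ε hε ↦ by rw [hε.2])) hlim

theorem exists_windingNumber_parallelCurve_eq_intCast (h : IsArcLengthLoop L l) {S : Set (ℝ × ℝ)}
    (hS : IsPreconnected S) (hoff : ∀ p ∈ S, parallelCurve l p.1 p.2 ∉ range l) :
    ∃ n : ℤ, ∀ p ∈ S, windingNumber L l (parallelCurve l p.1 p.2) = n := by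
  have hcont : Continuous fun p : ℝ × ℝ ↦ parallelCurve l p.1 p.2 := by
    have := h.continuous
    have := h.continuous_deriv
    unfold parallelCurve
    fun_prop
  have hC1 := h.contDiff.of_le one_le_two
  rcases S.eq_empty_or_nonempty with rfl | ⟨q, hq⟩
  · simp
  obtain ⟨n, hn⟩ := exists_windingNumber_eq_intCast hC1 h.periodic.eq (hoff q hq)
  have hdisj : Disjoint ((fun p : ℝ × ℝ ↦ parallelCurve l p.1 p.2) '' S) (range l) := by
    rw [Set.disjoint_left]
    rintro _ ⟨p, hp, rfl⟩
    exact hoff p hp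
  refine ⟨n, fun p hp ↦ hn ▸ windingNumber_eq_of_isPreconnected h.pos hC1 h.periodic
    (hS.image _ hcont.continuousOn) hdisj (mem_image_of_mem _ hp) (mem_image_of_mem _ hq)⟩

theorem exists_forall_parallelCurve_notMem_range (h : IsArcLengthLoop L l) :
    ∃ ε₀ > 0, ∀ s ε : ℝ, ε ≠ 0 → |ε| ≤ ε₀ → parallelCurve l s ε ∉ range l := by
  obtain ⟨ε₀, hε₀, C, hbound⟩ := h.exists_norm_tangentCorrection_le
  refine ⟨ε₀, hε₀, fun s ε hε hle ⟨t, ht⟩ ↦ ?_⟩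
  obtain ⟨x, hx, hxt⟩ := exists_abs_le_half_period h.periodic h.pos s t
  exact (hbound s x ε hx hle (.inr hε)).1 (by rw [hxt, ht, sub_self])

theorem exists_windingNumber_parallelCurve_eq (h : IsArcLengthLoop L l) :
    ∃ ε₀ > 0, ∃ n : ℤ,
      (∀ s, ∀ ε ∈ Ioo 0 ε₀, parallelCurve l s ε ∉ range l ∧
        windingNumber L l (parallelCurve l s ε) = n) ∧
      (∀ s, ∀ ε ∈ Ioo (-ε₀) 0, parallelCurve l s ε ∉ range l ∧
        windingNumber L l (parallelCurve l s ε) = (n + 1 : ℤ)) ∧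
      ∀ s, ∫ t in (0 : ℝ)..L, (deriv l t / (l t - l s)).im = π + 2 * π * n := by
  obtain ⟨ε₀, hε₀, hoff⟩ := h.exists_forall_parallelCurve_notMem_range
  have hoff_right (s : ℝ) : ∀ ε ∈ Ioo 0 ε₀, parallelCurve l s ε ∉ range l := fun ε hε ↦
    hoff s ε hε.1.ne' (abs_le.2 ⟨by linarith [hε.1], hε.2.le⟩)
  have hoff_left (s : ℝ) : ∀ ε ∈ Ioo (-ε₀) 0, parallelCurve l s ε ∉ range l := fun ε hε ↦
    hoff s ε hε.2.ne (abs_le.2 ⟨hε.1.le, by linarith [hε.2]⟩)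
  obtain ⟨n, hn⟩ := h.exists_windingNumber_parallelCurve_eq_intCast
    (isPreconnected_univ.prod isPreconnected_Ioo) fun p hp ↦ hoff_right p.1 p.2 hp.2
  obtain ⟨m, hm⟩ := h.exists_windingNumber_parallelCurve_eq_intCast
    (isPreconnected_univ.prod isPreconnected_Ioo) fun p hp ↦ hoff_left p.1 p.2 hp.2
  have hright (s) : ∀ ε ∈ Ioo 0 ε₀, parallelCurve l s ε ∉ range l ∧
      windingNumber L l (parallelCurve l s ε) = n := fun ε hε ↦
    ⟨hoff_right s ε hε, hn (s, ε) ⟨trivial, hε⟩⟩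
  have hleft (s) : ∀ ε ∈ Ioo (-ε₀) 0, parallelCurve l s ε ∉ range l ∧
      windingNumber L l (parallelCurve l s ε) = m := fun ε hε ↦
    ⟨hoff_left s ε hε, hm (s, ε) ⟨trivial, hε⟩⟩
  have hn_eq (s : ℝ) := h.two_pi_mul_re_eq_of_eventually_nhdsGT s
    (mem_of_superset (Ioo_mem_nhdsGT hε₀) (hright s))
  have hm_eq (s : ℝ) := h.two_pi_mul_re_eq_of_eventually_nhdsLT s
    (mem_of_superset (Ioo_mem_nhdsLT (neg_neg_of_pos hε₀)) (hleft s))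
  simp only [Complex.intCast_re] at hn_eq hm_eq
  have hmn : m = n + 1 := by
    have : (2 * π) * (m : ℝ) = 2 * π * (n + 1 : ℤ) := by
      push_cast
      linarith [hn_eq 0, hm_eq 0]
    exact_mod_cast mul_left_cancel₀ two_pi_pos.ne' this
  exact ⟨ε₀, hε₀, n, hright, hmn ▸ hleft, fun s ↦ by linarith [hn_eq s]⟩

theorem exists_abs_angularKernel_le (h : IsArcLengthLoop L l) :
    ∃ C, ∀ s t, |angularKernel l s t| ≤ C := by
  obtain ⟨ε₀, hε₀, C, hC⟩ := h.exists_norm_tangentCorrection_le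
  refine ⟨max C 0, fun s t ↦ ?_⟩
  have hper : Function.Periodic (fun s ↦ angularKernel l s t) L := fun s ↦ by
    simp only [angularKernel, h.periodic s, periodic_deriv h.periodic s]
  obtain ⟨x, hx, hxs⟩ := exists_abs_le_half_period hper h.pos t s
  rw [← hxs]
  rcases eq_or_ne x 0 with rfl | hx₀
  · simp [angularKernel]
  -- the tangent line is seen from its own points under a constant angle
  have htangent : angularKernel l (t + x) t = (tangentCorrection l t 0 x).im := by
    rw [tangentCorrection, Complex.sub_im, parallelCurve]
    simp [angularKernel]
  rw [htangent]
  exact (Complex.abs_im_le_norm _).trans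
    ((hC t x 0 hx (by simpa using hε₀.le) (.inl hx₀)).2.trans (le_max_left _ _))

theorem memLp_top_angularKernel (h : IsArcLengthLoop L l) {S : Type*} [MeasurableSpace S]
    {f g : S → ℝ} (hf : Measurable f) (hg : Measurable g) (ν : Measure S) :
    MemLp (fun p ↦ angularKernel l (f p) (g p)) ∞ ν := by
  obtain ⟨C, hC⟩ := h.exists_abs_angularKernel_le
  have hl := h.continuous.measurable
  have hmeas : Measurable fun p ↦ angularKernel l (f p) (g p) :=
    Complex.measurable_im.comp (by fun_prop)
  exact memLp_top_of_bound hmeas.aestronglyMeasurable C (Eventually.of_forall fun p ↦ hC _ _)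

variable {a b c : ℝ → ℝ}

theorem eq_zero_of_cauchyTransform_ae_eq_zero (h : IsArcLengthLoop L l) (hc : Continuous c)
    (hper : Function.Periodic c L)
    (hf : cauchyTransform (volume.restrict (Ioc 0 L)) l c =ᵐ[volume] 0) : c = 0 := by
  ext s
  by_contra hs
  have hl := h.continuous
  have hpos := h.pos
  obtain ⟨κ, hκ, ε₀, hε₀, hchord⟩ := h.exists_mul_norm_le_norm_sub_parallelCurve
  have hsign : ∀ᶠ x in 𝓝 0, 0 < c s * c (s + x) :=
    (by fun_prop : Continuous fun x ↦ c s * c (s + x)).continuousAt.eventually_const_lt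
      (by simpa using mul_self_pos.2 hs)
  obtain ⟨δ, hδ, hball⟩ := Metric.eventually_nhds_iff.1 hsign
  let bump (t : ℝ) : ℝ := c t * max ((κ * δ) ^ 2 - ‖l t - l s‖ ^ 2) 0
  have hbump : Continuous bump := by fun_prop
  have hbump_per : Function.Periodic bump L := fun t ↦ by simp only [bump, hper t, h.periodic t]
  have hzero : ∫ x in (-(L / 2))..(L / 2), c s * bump (s + x) = 0 := by
    rw [intervalIntegral.integral_const_mul, ← intervalIntegral_eq_integral_symmetric hbump_per s,
      intervalIntegral.integral_of_le h.pos.le, h.hasBoundedRieszPotential.integral_mul_max_eq_zero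
        (memLp_top_restrict_Ioc hc 0 L) hf (l s) (mul_pos hκ hδ), mul_zero]
  refine hzero.not_gt (intervalIntegral.integral_pos (by linarith) (by fun_prop) ?_
    ⟨0, ⟨by linarith, by linarith⟩, ?_⟩)
  · intro x hx
    rw [← mul_assoc]
    rcases lt_or_ge |x| δ with hxδ | hxδ
    · exact mul_nonneg (hball (by simpa using hxδ)).le (le_max_right _ _)
    · have harc : κ * |x| ≤ ‖l (s + x) - l s‖ := by
        simpa [parallelCurve] using
          hchord s x 0 (abs_le.2 ⟨hx.1.le, hx.2⟩) (by simpa using hε₀.le)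
      have hfar : κ * δ ≤ ‖l (s + x) - l s‖ :=
        (mul_le_mul_of_nonneg_left hxδ hκ.le).trans harc
      rw [max_eq_right (sub_nonpos.2 (pow_le_pow_left₀ (by positivity) hfar 2)), mul_zero]
  · have hbump₀ : c s * bump (s + 0) = c s * c s * (κ * δ) ^ 2 := by
      simp [bump, max_eq_left (sq_nonneg (κ * δ)), mul_assoc]
    rw [hbump₀]
    exact mul_pos (mul_self_pos.2 hs) (by positivity)

theorem logEnergy_self_neg (h : IsArcLengthLoop L l) (hc : Continuous c)
    (hper : Function.Periodic c L) (hmean : ∫ t in (0 : ℝ)..L, c t = 0) (hne : c ≠ 0) :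
    logEnergy (volume.restrict (Ioc 0 L)) l c c < 0 := by
  rw [intervalIntegral.integral_of_le h.pos.le] at hmean
  have hmem := memLp_top_restrict_Ioc hc 0 L
  refine (h.hasBoundedRieszPotential.logEnergy_self_nonpos hmem hmean).lt_of_ne fun hE ↦ hne ?_
  exact h.eq_zero_of_cauchyTransform_ae_eq_zero hc hper
    (h.hasBoundedRieszPotential.cauchyTransform_ae_eq_zero hmem hmean hE)

theorem differentiable_parallelCurve (h : IsArcLengthLoop L l) (ε : ℝ) :
    Differentiable ℝ fun s ↦ parallelCurve l s ε :=
  h.differentiable.sub ((h.contDiff_deriv.differentiable one_ne_zero).const_mul _)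

theorem logPotential_parallelCurve_eq (h : IsArcLengthLoop L l)
    (hc : MemLp c ∞ (volume.restrict (Ioc 0 L))) {ε : ℝ}
    (hoff : ∀ s, parallelCurve l s ε ∉ range l)
    (hf : ∀ s, cauchyTransform (volume.restrict (Ioc 0 L)) l c (parallelCurve l s ε) = 0)
    (s t : ℝ) :
    logPotential (volume.restrict (Ioc 0 L)) l c (parallelCurve l s ε) =
      logPotential (volume.restrict (Ioc 0 L)) l c (parallelCurve l t ε) := by
  have hderiv (r : ℝ) : HasDerivAt
      (fun r ↦ logPotential (volume.restrict (Ioc 0 L)) l c (parallelCurve l r ε)) 0 r := by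
    have hpotential := h.hasBoundedRieszPotential.hasFDerivAt_logPotential hc
      (h.isClosed_range.closure_eq.symm ▸ hoff r)
    simpa [hf r] using!
      hpotential.comp_hasDerivAt r (h.differentiable_parallelCurve ε r).hasDerivAt
  exact is_const_of_deriv_eq_zero (fun r ↦ (hderiv r).differentiableAt)
    (fun r ↦ (hderiv r).deriv) s t

theorem logEnergy_eq_zero_of_cauchyTransform_parallelCurve_eq_zero (h : IsArcLengthLoop L l)
    (hc : MemLp c ∞ (volume.restrict (Ioc 0 L))) (hmean : ∫ t in (0 : ℝ)..L, c t = 0)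
    {ε₀ : ℝ} (hε₀ : 0 < ε₀) (hoff : ∀ s, ∀ ε ∈ Ioo 0 ε₀, parallelCurve l s ε ∉ range l)
    (hf : ∀ s, ∀ ε ∈ Ioo 0 ε₀,
      cauchyTransform (volume.restrict (Ioc 0 L)) l c (parallelCurve l s ε) = 0) :
    logEnergy (volume.restrict (Ioc 0 L)) l c c = 0 := by
  have hlim (s : ℝ) : Tendsto
      (fun ε ↦ logPotential (volume.restrict (Ioc 0 L)) l c (parallelCurve l s ε)) (𝓝[>] 0)
      (𝓝 (logPotential (volume.restrict (Ioc 0 L)) l c (l s))) := by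
    have hcont : Continuous fun ε ↦
        logPotential (volume.restrict (Ioc 0 L)) l c (parallelCurve l s ε) :=
      (h.hasBoundedRieszPotential.continuous_logPotential hc).comp
        (by unfold parallelCurve; fun_prop)
    simpa [parallelCurve] using (hcont.tendsto 0).mono_left nhdsWithin_le_nhds
  have hconst (s : ℝ) : logPotential (volume.restrict (Ioc 0 L)) l c (l s) =
      logPotential (volume.restrict (Ioc 0 L)) l c (l 0) := by
    refine tendsto_nhds_unique (hlim s) ((hlim 0).congr' ?_)
    filter_upwards [Ioo_mem_nhdsGT hε₀] with ε hε
    exact h.logPotential_parallelCurve_eq hc (hoff · ε hε) (hf · ε hε) 0 s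
  rw [logEnergy]
  simp_rw [hconst]
  rw [integral_mul_const, ← intervalIntegral.integral_of_le h.pos.le, hmean, zero_mul]

theorem memLp_top_deriv_mul (h : IsArcLengthLoop L l)
    (ha : MemLp a ∞ (volume.restrict (Ioc 0 L))) :
    MemLp (fun p : ℝ × ℝ ↦ -(2 * π * Complex.I)⁻¹ * deriv l p.1 * (a p.2 : ℂ)) ∞
      ((volume.restrict (Ioc 0 L)).prod (volume.restrict (Ioc 0 L))) := by
  have hderiv := (memLp_top_restrict_Ioc h.continuous_deriv 0 L).const_mul
    (-(2 * π * Complex.I : ℂ)⁻¹)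
  exact (ha.ofReal.comp_snd _).mul (hderiv.comp_fst _)

theorem integrable_windingNumber_mul (h : IsArcLengthLoop L l)
    (ha : MemLp a ∞ (volume.restrict (Ioc 0 L))) (hb : MemLp b ∞ (volume.restrict (Ioc 0 L))) :
    Integrable fun z ↦ windingNumber L l z * cauchyTransform (volume.restrict (Ioc 0 L)) l a z *
      conj (cauchyTransform (volume.restrict (Ioc 0 L)) l b z) := by
  simpa only [pairTransform_deriv_mul h.pos.le] using
    h.hasBoundedRieszPotential.integrable_pairTransform_mul_conj (h.memLp_top_deriv_mul ha) hb

theorem integral_KA_mul (h : IsArcLengthLoop L l) {φ : ℝ → ℂ} (hφ : Continuous φ) (s : ℝ) :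
    ∫ t in (0 : ℝ)..L, (KA l s t : ℂ) * φ t =
      (doubleLayerOperator L l (fun t ↦ (φ t).re) s : ℂ) +
        doubleLayerOperator L l (fun t ↦ (φ t).im) s * Complex.I := by
  have hint : Integrable (fun t ↦ (angularKernel l s t : ℂ) * φ t) (volume.restrict (Ioc 0 L)) :=
    ((memLp_top_restrict_Ioc hφ 0 L).mul (r := ∞) (h.memLp_top_angularKernel measurable_const
      measurable_id (volume.restrict (Ioc 0 L))).ofReal).integrable le_top
  have hkernel : ∫ t in Ioc 0 L, (KA l s t : ℂ) * φ t =
      ∫ t in Ioc 0 L, (angularKernel l s t : ℂ) * φ t := by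
    refine integral_congr_ae ?_
    filter_upwards [h.hasBoundedRieszPotential.ae_ne (l s)] with t ht
    rw [KA_eq_angularKernel ht]
  simp only [doubleLayerOperator, intervalIntegral.integral_of_le h.pos.le]
  rw [hkernel, ← integral_re_add_im hint]
  simp

theorem cauchyTransform_eq_zero_of_windingNumber_eq_zero (h : IsArcLengthLoop L l)
    (hc : Integrable c (volume.restrict (Ioc 0 L)))
    (hf : ∀ᵐ z, windingNumber L l z = 0 → cauchyTransform (volume.restrict (Ioc 0 L)) l c z = 0)
    {z : ℂ} (hz : z ∉ range l) (hw : windingNumber L l z = 0) :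
    cauchyTransform (volume.restrict (Ioc 0 L)) l c z = 0 := by
  have hl := h.contDiff.of_le one_le_two
  have hcont : ContinuousOn (fun z ↦
      (windingNumber L l z, cauchyTransform (volume.restrict (Ioc 0 L)) l c z)) (range l)ᶜ := by
    refine (continuousOn_windingNumber h.pos hl h.periodic).prodMk ?_
    simpa only [h.isClosed_range.closure_eq] using
      continuousOn_cauchyTransform h.continuous.measurable hc
  by_contra hfz
  have hopen := hcont.isOpen_inter_preimage h.isClosed_range.isOpen_compl
    ((Metric.isOpen_ball (x := (0 : ℂ)) (ε := 1)).prod (isOpen_compl_singleton (x := (0 : ℂ))))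
  refine hopen.measure_ne_zero volume ⟨z, hz, by simp [hw], hfz⟩
    (measure_eq_zero_iff_ae_notMem.2 ?_)
  filter_upwards [hf] with w hfw ⟨hw, (hw₁ : windingNumber L l w ∈ Metric.ball 0 1), hfw₀⟩
  obtain ⟨n, hn⟩ := exists_windingNumber_eq_intCast hl h.periodic.eq hw
  have hn₀ : n = 0 := by
    rw [hn, mem_ball_zero_iff, Complex.norm_intCast] at hw₁
    exact Int.abs_lt_one_iff.1 (mod_cast hw₁)
  exact hfw₀ (hfw (by simp [hn, hn₀]))

theorem parallelCurve_sub_parallelCurve (l : ℝ → ℂ) (s ε ε' : ℝ) :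
    parallelCurve l s ε - parallelCurve l s ε' = (ε' - ε : ℝ) * Complex.I * deriv l s := by
  rw [parallelCurve, parallelCurve]
  push_cast
  ring

theorem exists_windingNumber_eq_parallelCurve (h : IsArcLengthLoop L l) {z : ℂ}
    (hz : z ∉ range l) {ε₀ : ℝ} (hε₀ : 0 < ε₀) :
    ∃ s ε : ℝ, ε ≠ 0 ∧ |ε| < ε₀ ∧
      windingNumber L l z = windingNumber L l (parallelCurve l s ε) := by
  obtain ⟨s, hs⟩ := h.exists_forall_norm_sub_le z
  obtain ⟨ρ, rfl⟩ := h.exists_eq_parallelCurve hs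
  have hdist (a b : ℝ) : ‖parallelCurve l s a - parallelCurve l s b‖ = |b - a| := by
    rw [parallelCurve_sub_parallelCurve, norm_mul, norm_mul, Complex.norm_I, h.norm_deriv,
      mul_one, mul_one, Complex.norm_real, norm_eq_abs]
  have hzero : l s = parallelCurve l s 0 := by simp [parallelCurve]
  have hρ : ρ ≠ 0 := by
    rintro rfl
    exact hz ⟨s, hzero⟩
  have hρ_pos : 0 < |ρ| := abs_pos.2 hρ
  have hoff : ∀ p ∈ (fun a : ℝ ↦ (s, a * ρ)) '' Ioc 0 1, parallelCurve l p.1 p.2 ∉ range l := by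
    rintro _ ⟨a, ⟨ha₀, ha₁⟩, rfl⟩ ⟨t, ht⟩
    have hle := hs t
    rw [ht, hzero, hdist, hdist, sub_zero, ← one_sub_mul, abs_mul,
      abs_of_nonneg (sub_nonneg.2 ha₁)] at hle
    nlinarith
  obtain ⟨n, hn⟩ := h.exists_windingNumber_parallelCurve_eq_intCast
    (isPreconnected_Ioc.image _ (by fun_prop)) hoff
  let a := min 1 (ε₀ / (2 * |ρ|))
  have ha : 0 < a := by positivity
  refine ⟨s, a * ρ, mul_ne_zero ha.ne' hρ, ?_, ?_⟩
  · calc |a * ρ| = a * |ρ| := by rw [abs_mul, abs_of_pos ha]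
      _ ≤ ε₀ / (2 * |ρ|) * |ρ| := by
        gcongr
        exact min_le_right _ _
      _ < ε₀ := by
        field_simp
        linarith
  · rw [hn (s, a * ρ) ⟨a, ⟨ha, min_le_left _ _⟩, rfl⟩, hn (s, ρ) ⟨1, by simp⟩]

theorem windingNumber_eq_or_eq_of_parallelCurve (h : IsArcLengthLoop L l) {ε₀ : ℝ} (hε₀ : 0 < ε₀)
    {m n : ℂ} (hright : ∀ s, ∀ ε ∈ Ioo 0 ε₀, windingNumber L l (parallelCurve l s ε) = m)
    (hleft : ∀ s, ∀ ε ∈ Ioo (-ε₀) 0, windingNumber L l (parallelCurve l s ε) = n) {z : ℂ}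
    (hz : z ∉ range l) : windingNumber L l z = m ∨ windingNumber L l z = n := by
  obtain ⟨s, ε, hne, hε, hzε⟩ := h.exists_windingNumber_eq_parallelCurve hz hε₀
  rw [hzε]
  rcases hne.lt_or_gt with hneg | hpos
  · exact .inr (hleft s ε ⟨(abs_lt.1 hε).1, hneg⟩)
  · exact .inl (hright s ε ⟨hpos, (abs_lt.1 hε).2⟩)

end IsArcLengthLoop

theorem re_mul_mul_conj (w z : ℂ) : (w * z * conj z).re = w.re * ‖z‖ ^ 2 := by
  rw [mul_assoc, Complex.mul_conj', ← Complex.ofReal_pow, Complex.re_mul_ofReal]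

/-- An arc length loop that is traversed counterclockwise, i.e. has winding number one about some
point off the curve. -/
structure IsCounterclockwiseLoop (L : ℝ) (l : ℝ → ℂ) : Prop extends IsArcLengthLoop L l where
  exists_windingNumber_eq_one : ∃ z ∉ range l, windingNumber L l z = 1

namespace IsCounterclockwiseLoop

variable {L : ℝ} {l : ℝ → ℂ}

theorem exists_windingNumber_parallelCurve_eq_zero_and_one (h : IsCounterclockwiseLoop L l) :
    ∃ ε₀ > 0,
      (∀ s, ∀ ε ∈ Ioo 0 ε₀, parallelCurve l s ε ∉ range l ∧
        windingNumber L l (parallelCurve l s ε) = 0) ∧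
      (∀ s, ∀ ε ∈ Ioo (-ε₀) 0, parallelCurve l s ε ∉ range l ∧
        windingNumber L l (parallelCurve l s ε) = 1) ∧
      ∀ s, ∫ t in (0 : ℝ)..L, (deriv l t / (l t - l s)).im = π := by
  obtain ⟨ε₀, hε₀, n, hright, hleft, hint⟩ := h.exists_windingNumber_parallelCurve_eq
  have hval {z : ℂ} (hz : z ∉ range l) := h.windingNumber_eq_or_eq_of_parallelCurve hε₀
    (fun s ε hε ↦ (hright s ε hε).2) (fun s ε hε ↦ (hleft s ε hε).2) hz
  -- the values `0`, attained far away, and `1` both lie in `{n, n + 1}`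
  have hn : n = 0 := by
    obtain ⟨z₀, hz₀, hzero⟩ := exists_windingNumber_eq_zero h.pos
      (h.contDiff.of_le one_le_two) h.periodic
    obtain ⟨z₁, hz₁, hone⟩ := h.exists_windingNumber_eq_one
    have h₀ := hval hz₀
    have h₁ := hval hz₁
    rw [hzero] at h₀
    rw [hone] at h₁
    norm_cast at h₀ h₁
    omega
  subst hn
  exact ⟨ε₀, hε₀, by simpa using hright, by simpa using hleft, by simpa using hint⟩

theorem windingNumber_eq_zero_or_eq_one (h : IsCounterclockwiseLoop L l) {z : ℂ}
    (hz : z ∉ range l) : windingNumber L l z = 0 ∨ windingNumber L l z = 1 := by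
  obtain ⟨ε₀, hε₀, hright, hleft, -⟩ := h.exists_windingNumber_parallelCurve_eq_zero_and_one
  exact h.windingNumber_eq_or_eq_of_parallelCurve hε₀
    (fun s ε hε ↦ (hright s ε hε).2) (fun s ε hε ↦ (hleft s ε hε).2) hz

theorem integral_angularKernel (h : IsCounterclockwiseLoop L l) (t : ℝ) :
    ∫ s in (0 : ℝ)..L, angularKernel l s t = π := by
  obtain ⟨-, -, -, -, hint⟩ := h.exists_windingNumber_parallelCurve_eq_zero_and_one
  exact hint t

variable {a b c : ℝ → ℝ}

theorem integral_angularKernel_mul_logPotential_sub (h : IsCounterclockwiseLoop L l)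
    (ha : MemLp a ∞ (volume.restrict (Ioc 0 L))) (hb : MemLp b ∞ (volume.restrict (Ioc 0 L))) :
    ∫ p, angularKernel l p.1 p.2 * a p.2 *
        (logPotential (volume.restrict (Ioc 0 L)) l b (l p.1) -
          logPotential (volume.restrict (Ioc 0 L)) l b (l p.2))
        ∂((volume.restrict (Ioc 0 L)).prod (volume.restrict (Ioc 0 L))) =
      logEnergy (volume.restrict (Ioc 0 L)) l (doubleLayerOperator L l a) b -
        π * logEnergy (volume.restrict (Ioc 0 L)) l a b := by
  set μ := volume.restrict (Ioc 0 L)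
  set U := fun t ↦ logPotential μ l b (l t)
  have hU : MemLp U ∞ μ := h.hasBoundedRieszPotential.memLp_top_logPotential hb
  have hK : MemLp (fun p : ℝ × ℝ ↦ angularKernel l p.1 p.2 * a p.2) ∞ (μ.prod μ) :=
    (ha.comp_snd μ).mul (h.memLp_top_angularKernel measurable_fst measurable_snd _)
  have hfst : Integrable (fun p : ℝ × ℝ ↦ angularKernel l p.1 p.2 * a p.2 * U p.1) (μ.prod μ) :=
    ((hU.comp_fst μ).mul hK).integrable le_top
  have hsnd : Integrable (fun p : ℝ × ℝ ↦ angularKernel l p.1 p.2 * a p.2 * U p.2) (μ.prod μ) :=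
    ((hU.comp_snd μ).mul hK).integrable le_top
  simp only [mul_sub]
  rw [integral_sub hfst hsnd, integral_prod _ hfst, integral_prod_symm _ hsnd, logEnergy,
    logEnergy, ← integral_const_mul]
  congr 2 with t
  · simp only [U]
    rw [integral_mul_const, doubleLayerOperator, intervalIntegral.integral_of_le h.pos.le]
  · simp only [mul_assoc]
    rw [integral_mul_const, ← intervalIntegral.integral_of_le h.pos.le, h.integral_angularKernel]

theorem re_integral_windingNumber_mul (h : IsCounterclockwiseLoop L l)
    (ha : MemLp a ∞ (volume.restrict (Ioc 0 L))) (hb : MemLp b ∞ (volume.restrict (Ioc 0 L))) :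
    (∫ z, windingNumber L l z * cauchyTransform (volume.restrict (Ioc 0 L)) l a z *
        conj (cauchyTransform (volume.restrict (Ioc 0 L)) l b z)).re =
      logEnergy (volume.restrict (Ioc 0 L)) l (doubleLayerOperator L l a) b -
        π * logEnergy (volume.restrict (Ioc 0 L)) l a b := by
  have hRiesz := h.hasBoundedRieszPotential
  have hw := h.memLp_top_deriv_mul ha
  simp only [← pairTransform_deriv_mul h.pos.le]
  rw [hRiesz.integral_pairTransform_mul_conj hw hb,
    ← h.integral_angularKernel_mul_logPotential_sub ha hb]
  refine (integral_re (hRiesz.integrable_mul_logPotential_sub hw hb)).symm.trans ?_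
  congr 1 with p
  have hkernel : -(2 * π * Complex.I)⁻¹ * deriv l p.1 * a p.2 * (2 * π / (l p.1 - l p.2)) =
      (a p.2 : ℝ) * (Complex.I * (deriv l p.1 / (l p.1 - l p.2))) := by
    have hpi : (π : ℂ) ≠ 0 := by exact_mod_cast pi_ne_zero
    rw [mul_inv, Complex.inv_I]
    field_simp
  rw [hkernel, RCLike.re_eq_complex_re, Complex.re_mul_ofReal, Complex.re_ofReal_mul,
    Complex.I_mul_re, angularKernel]
  ring

theorem windingNumber_ae_eq_zero_or_eq_one (h : IsCounterclockwiseLoop L l) :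
    ∀ᵐ z, windingNumber L l z = 0 ∨ windingNumber L l z = 1 := by
  filter_upwards [measure_eq_zero_iff_ae_notMem.1
    (volume_range_eq_zero_of_differentiable h.differentiable)] with z hz
  exact h.windingNumber_eq_zero_or_eq_one hz

theorem logEnergy_doubleLayerOperator_comm (h : IsCounterclockwiseLoop L l)
    (ha : MemLp a ∞ (volume.restrict (Ioc 0 L))) (ha₀ : ∫ t in (0 : ℝ)..L, a t = 0)
    (hb : MemLp b ∞ (volume.restrict (Ioc 0 L))) (hb₀ : ∫ t in (0 : ℝ)..L, b t = 0) :
    logEnergy (volume.restrict (Ioc 0 L)) l (doubleLayerOperator L l a) b =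
      logEnergy (volume.restrict (Ioc 0 L)) l (doubleLayerOperator L l b) a := by
  set μ := volume.restrict (Ioc 0 L)
  have hconj : ∫ z, windingNumber L l z * cauchyTransform μ l b z * conj (cauchyTransform μ l a z) =
      conj (∫ z, windingNumber L l z * cauchyTransform μ l a z *
        conj (cauchyTransform μ l b z)) := by
    rw [← integral_conj]
    refine integral_congr_ae ?_
    filter_upwards [h.windingNumber_ae_eq_zero_or_eq_one] with z hz
    rcases hz with hz | hz <;> simp [hz, mul_comm]
  have hab := h.re_integral_windingNumber_mul ha hb
  have hba := h.re_integral_windingNumber_mul hb ha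
  rw [intervalIntegral.integral_of_le h.pos.le] at ha₀ hb₀
  rw [hconj, Complex.conj_re, hab,
    h.hasBoundedRieszPotential.logEnergy_comm hb hb₀ ha ha₀] at hba
  exact sub_left_injective hba

theorem integrable_re_windingNumber_mul_norm_sq (h : IsCounterclockwiseLoop L l)
    (hc : MemLp c ∞ (volume.restrict (Ioc 0 L))) :
    Integrable fun z ↦
      (windingNumber L l z).re * ‖cauchyTransform (volume.restrict (Ioc 0 L)) l c z‖ ^ 2 := by
  simpa only [RCLike.re_eq_complex_re, re_mul_mul_conj] using
    (h.integrable_windingNumber_mul hc hc).re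

theorem integral_re_windingNumber_mul_norm_sq (h : IsCounterclockwiseLoop L l)
    (hc : MemLp c ∞ (volume.restrict (Ioc 0 L))) :
    ∫ z, (windingNumber L l z).re * ‖cauchyTransform (volume.restrict (Ioc 0 L)) l c z‖ ^ 2 =
      logEnergy (volume.restrict (Ioc 0 L)) l (doubleLayerOperator L l c) c -
        π * logEnergy (volume.restrict (Ioc 0 L)) l c c := by
  rw [← h.re_integral_windingNumber_mul hc hc]
  simpa only [RCLike.re_eq_complex_re, re_mul_mul_conj] using
    integral_re (h.integrable_windingNumber_mul hc hc)

theorem integral_one_sub_re_windingNumber_mul_norm_sq (h : IsCounterclockwiseLoop L l)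
    (hc : MemLp c ∞ (volume.restrict (Ioc 0 L))) (hmean : ∫ t in (0 : ℝ)..L, c t = 0) :
    ∫ z, (1 - (windingNumber L l z).re) *
        ‖cauchyTransform (volume.restrict (Ioc 0 L)) l c z‖ ^ 2 =
      -π * logEnergy (volume.restrict (Ioc 0 L)) l c c -
        logEnergy (volume.restrict (Ioc 0 L)) l (doubleLayerOperator L l c) c := by
  rw [intervalIntegral.integral_of_le h.pos.le] at hmean
  simp only [one_sub_mul]
  rw [integral_sub (h.hasBoundedRieszPotential.integrable_norm_sq_cauchyTransform hc hmean)
    (h.integrable_re_windingNumber_mul_norm_sq hc), h.integral_re_windingNumber_mul_norm_sq hc,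
    h.hasBoundedRieszPotential.integral_norm_sq_cauchyTransform hc hmean]
  ring

theorem integrable_one_sub_re_windingNumber_mul_norm_sq (h : IsCounterclockwiseLoop L l)
    (hc : MemLp c ∞ (volume.restrict (Ioc 0 L))) (hmean : ∫ t in (0 : ℝ)..L, c t = 0) :
    Integrable fun z ↦ (1 - (windingNumber L l z).re) *
      ‖cauchyTransform (volume.restrict (Ioc 0 L)) l c z‖ ^ 2 := by
  rw [intervalIntegral.integral_of_le h.pos.le] at hmean
  simpa only [one_sub_mul] using!
    (h.hasBoundedRieszPotential.integrable_norm_sq_cauchyTransform hc hmean).sub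
      (h.integrable_re_windingNumber_mul_norm_sq hc)

theorem pi_mul_logEnergy_self_le (h : IsCounterclockwiseLoop L l)
    (hc : MemLp c ∞ (volume.restrict (Ioc 0 L))) :
    π * logEnergy (volume.restrict (Ioc 0 L)) l c c ≤
      logEnergy (volume.restrict (Ioc 0 L)) l (doubleLayerOperator L l c) c := by
  rw [← sub_nonneg, ← h.integral_re_windingNumber_mul_norm_sq hc]
  refine integral_nonneg_of_ae ?_
  filter_upwards [h.windingNumber_ae_eq_zero_or_eq_one] with z hz
  rcases hz with hz | hz <;> simp [hz]

theorem logEnergy_doubleLayerOperator_self_lt (h : IsCounterclockwiseLoop L l)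
    (hc : Continuous c) (hper : Function.Periodic c L) (hmean : ∫ t in (0 : ℝ)..L, c t = 0)
    (hne : c ≠ 0) :
    logEnergy (volume.restrict (Ioc 0 L)) l (doubleLayerOperator L l c) c <
      -π * logEnergy (volume.restrict (Ioc 0 L)) l c c := by
  have hneg := h.logEnergy_self_neg hc hper hmean hne
  have hmem := memLp_top_restrict_Ioc hc 0 L
  set μ := volume.restrict (Ioc 0 L)
  have hnonneg : 0 ≤ᵐ[volume] fun z ↦
      (1 - (windingNumber L l z).re) * ‖cauchyTransform μ l c z‖ ^ 2 := by
    filter_upwards [h.windingNumber_ae_eq_zero_or_eq_one] with z hz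
    rcases hz with hz | hz <;> simp [hz]
  rw [← sub_pos, ← h.integral_one_sub_re_windingNumber_mul_norm_sq hmem hmean]
  refine (integral_nonneg_of_ae hnonneg).lt_of_ne' fun hzero ↦ hneg.ne ?_
  rw [integral_eq_zero_iff_of_nonneg_ae hnonneg
    (h.integrable_one_sub_re_windingNumber_mul_norm_sq hmem hmean)] at hzero
  have hf : ∀ᵐ z, windingNumber L l z = 0 → cauchyTransform μ l c z = 0 := by
    filter_upwards [hzero] with z hz hw
    simpa [hw] using hz
  obtain ⟨ε₀, hε₀, hext, -⟩ := h.exists_windingNumber_parallelCurve_eq_zero_and_one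
  exact h.logEnergy_eq_zero_of_cauchyTransform_parallelCurve_eq_zero hmem hmean hε₀
    (fun s ε hε ↦ (hext s ε hε).1) fun s ε hε ↦
      h.cauchyTransform_eq_zero_of_windingNumber_eq_zero (hmem.integrable le_top) hf
        (hext s ε hε).1 (hext s ε hε).2

theorem integral_doubleLayerOperator (h : IsCounterclockwiseLoop L l)
    (ha : MemLp a ∞ (volume.restrict (Ioc 0 L))) :
    ∫ s in (0 : ℝ)..L, doubleLayerOperator L l a s = π * ∫ t in (0 : ℝ)..L, a t := by
  set μ := volume.restrict (Ioc 0 L)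
  have hK : Integrable (fun p : ℝ × ℝ ↦ angularKernel l p.1 p.2 * a p.2) (μ.prod μ) :=
    ((ha.comp_snd μ).mul (r := ∞)
      (h.memLp_top_angularKernel measurable_fst measurable_snd _)).integrable le_top
  simp only [doubleLayerOperator, intervalIntegral.integral_of_le h.pos.le]
  rw [integral_integral_swap hK, ← integral_const_mul]
  congr 1 with t
  rw [integral_mul_const, ← intervalIntegral.integral_of_le h.pos.le, h.integral_angularKernel]

theorem mem_Ioc_of_doubleLayerOperator_eq_mul (h : IsCounterclockwiseLoop L l)
    (hc : Continuous c) (hper : Function.Periodic c L) (hmean : ∫ t in (0 : ℝ)..L, c t = 0)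
    (hne : c ≠ 0) {r : ℝ} (hr : ∀ s, doubleLayerOperator L l c s = r * c s) : r ∈ Ioc (-π) π := by
  have hneg := h.logEnergy_self_neg hc hper hmean hne
  have hlower := h.logEnergy_doubleLayerOperator_self_lt hc hper hmean hne
  have hupper := h.pi_mul_logEnergy_self_le (memLp_top_restrict_Ioc hc 0 L)
  have henergy : logEnergy (volume.restrict (Ioc 0 L)) l (doubleLayerOperator L l c) c =
      r * logEnergy (volume.restrict (Ioc 0 L)) l c c := by
    simp only [logEnergy, hr, mul_assoc, integral_const_mul]
  rw [henergy] at hlower hupper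
  exact ⟨(mul_lt_mul_right_of_neg hneg).1 hlower, (mul_le_mul_right_of_neg hneg).1 hupper⟩

theorem im_eigenvalue_mul_logEnergy_add_eq_zero (h : IsCounterclockwiseLoop L l)
    (ha : MemLp a ∞ (volume.restrict (Ioc 0 L))) (ha₀ : ∫ t in (0 : ℝ)..L, a t = 0)
    (hb : MemLp b ∞ (volume.restrict (Ioc 0 L))) (hb₀ : ∫ t in (0 : ℝ)..L, b t = 0)
    {x y : ℝ} (hAa : ∀ s, doubleLayerOperator L l a s = x * a s - y * b s)
    (hAb : ∀ s, doubleLayerOperator L l b s = y * a s + x * b s) :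
    y * (logEnergy (volume.restrict (Ioc 0 L)) l a a +
      logEnergy (volume.restrict (Ioc 0 L)) l b b) = 0 := by
  have hcomm := h.logEnergy_doubleLayerOperator_comm ha ha₀ hb hb₀
  simp only [sub_eq_add_neg, ← neg_mul] at hAa
  rw [funext hAa, funext hAb,
    h.hasBoundedRieszPotential.logEnergy_linearCombination_left x (-y) ha hb hb,
    h.hasBoundedRieszPotential.logEnergy_linearCombination_left y x ha hb ha,
    h.hasBoundedRieszPotential.logEnergy_comm ha
      (by rwa [← intervalIntegral.integral_of_le h.pos.le]) hb
      (by rwa [← intervalIntegral.integral_of_le h.pos.le])] at hcomm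
  linear_combination -hcomm

theorem eigenvalue_eq_pi_or_integral_eq_zero (h : IsCounterclockwiseLoop L l)
    (ha : Continuous a) (hb : Continuous b) {x y : ℝ}
    (hAa : ∀ s, doubleLayerOperator L l a s = x * a s - y * b s)
    (hAb : ∀ s, doubleLayerOperator L l b s = y * a s + x * b s) :
    (x = π ∧ y = 0) ∨ ((∫ t in (0 : ℝ)..L, a t = 0) ∧ ∫ t in (0 : ℝ)..L, b t = 0) := by
  have hmeanA := h.integral_doubleLayerOperator (memLp_top_restrict_Ioc ha 0 L)
  have hmeanB := h.integral_doubleLayerOperator (memLp_top_restrict_Ioc hb 0 L)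
  have ha' (r : ℝ) := (ha.const_mul r).intervalIntegrable (μ := volume) 0 L
  have hb' (r : ℝ) := (hb.const_mul r).intervalIntegrable (μ := volume) 0 L
  simp only [hAa, hAb, intervalIntegral.integral_sub (ha' _) (hb' _),
    intervalIntegral.integral_add (ha' _) (hb' _), intervalIntegral.integral_const_mul]
    at hmeanA hmeanB
  rw [or_iff_not_imp_left]
  intro hπ
  have hdet : (x - π) ^ 2 + y ^ 2 ≠ 0 := fun hzero ↦ hπ
    ⟨by nlinarith [sq_nonneg y], by nlinarith [sq_nonneg (x - π)]⟩
  constructor <;> refine (mul_eq_zero.1 ?_).resolve_left hdet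
  · linear_combination (x - π) * hmeanA + y * hmeanB
  · linear_combination (x - π) * hmeanB - y * hmeanA

theorem eigenvalue_mem_Ioc (h : IsCounterclockwiseLoop L l) (ha : Continuous a)
    (ha_per : Function.Periodic a L) (hb : Continuous b) (hb_per : Function.Periodic b L)
    (hne : a ≠ 0 ∨ b ≠ 0) {x y : ℝ}
    (hAa : ∀ s, doubleLayerOperator L l a s = x * a s - y * b s)
    (hAb : ∀ s, doubleLayerOperator L l b s = y * a s + x * b s) : y = 0 ∧ x ∈ Ioc (-π) π := by
  rcases h.eigenvalue_eq_pi_or_integral_eq_zero ha hb hAa hAb with ⟨rfl, hy⟩ | ⟨ha₀, hb₀⟩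
  · exact ⟨hy, by linarith [pi_pos], le_rfl⟩
  have hnonpos {c : ℝ → ℝ} (hc : Continuous c) (hc₀ : ∫ t in (0 : ℝ)..L, c t = 0) :
      logEnergy (volume.restrict (Ioc 0 L)) l c c ≤ 0 :=
    h.hasBoundedRieszPotential.logEnergy_self_nonpos (memLp_top_restrict_Ioc hc 0 L)
      (by rwa [← intervalIntegral.integral_of_le h.pos.le])
  have henergy : logEnergy (volume.restrict (Ioc 0 L)) l a a +
      logEnergy (volume.restrict (Ioc 0 L)) l b b < 0 := by
    rcases hne with hne | hne
    · exact add_neg_of_neg_of_nonpos (h.logEnergy_self_neg ha ha_per ha₀ hne) (hnonpos hb hb₀)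
    · exact add_neg_of_nonpos_of_neg (hnonpos ha ha₀) (h.logEnergy_self_neg hb hb_per hb₀ hne)
  obtain rfl : y = 0 := (mul_eq_zero.1 (h.im_eigenvalue_mul_logEnergy_add_eq_zero
    (memLp_top_restrict_Ioc ha 0 L) ha₀ (memLp_top_restrict_Ioc hb 0 L) hb₀ hAa hAb)
    ).resolve_right henergy.ne
  refine ⟨rfl, ?_⟩
  rcases hne with hne | hne
  · exact h.mem_Ioc_of_doubleLayerOperator_eq_mul ha ha_per ha₀ hne fun s ↦ by simp [hAa]
  · exact h.mem_Ioc_of_doubleLayerOperator_eq_mul hb hb_per hb₀ hne fun s ↦ by simp [hAb]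

end IsCounterclockwiseLoop

theorem isCounterclockwiseLoop_of_integral_eq {L : ℝ} {l : ℝ → ℂ} (h : IsArcLengthLoop L l)
    {z : ℂ} (hz : z ∉ range l)
    (hint : ∫ t in (0 : ℝ)..L, deriv l t / (l t - z) = 2 * (π : ℂ) * Complex.I) :
    IsCounterclockwiseLoop L l where
  toIsArcLengthLoop := h
  exists_windingNumber_eq_one :=
    ⟨z, hz, by rw [windingNumber, hint, inv_mul_cancel₀ Complex.two_pi_I_ne_zero]⟩

end DoubleLayer

theorem double_layer_eigenvalues_real_general
    (L : ℝ) (hL : 0 < L) (l : ℝ → ℂ)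
    (hsm : ContDiff ℝ 2 l) (hper : ∀ s, l (s + L) = l s)
    (harc : ∀ s, ‖deriv l s‖ = 1) (hinj : Set.InjOn l (Set.Ico 0 L))
    (horient : ∃ z₀ : ℂ, (∀ s, l s ≠ z₀) ∧
      (∫ t in (0 : ℝ)..L, deriv l t / (l t - z₀)) = 2 * (π : ℂ) * Complex.I)
    (φ : ℝ → ℂ) (hφc : Continuous φ) (hφper : ∀ x, φ (x + L) = φ x)
    (hφne : ∃ s, φ s ≠ 0) (lam : ℂ)
    (heig : ∀ s : ℝ, (∫ t in (0 : ℝ)..L, (KA l s t : ℂ) * φ t) = lam * φ s) :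
    lam.im = 0 ∧ -π < lam.re ∧ lam.re ≤ π := by
  obtain ⟨z, hz, hint⟩ := horient
  have h := isCounterclockwiseLoop_of_integral_eq ⟨hL, hsm, hper, harc, hinj⟩
    (fun ⟨s, hs⟩ ↦ hz s hs) hint
  obtain ⟨s, hs⟩ := hφne
  have hne : (fun t ↦ (φ t).re) ≠ 0 ∨ (fun t ↦ (φ t).im) ≠ 0 := by
    by_contra! hzero
    exact hs (Complex.ext (congrFun hzero.1 s) (congrFun hzero.2 s))
  refine h.eigenvalue_mem_Ioc (a := fun t ↦ (φ t).re) (b := fun t ↦ (φ t).im)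
    (Complex.continuous_re.comp hφc) (fun t ↦ congrArg Complex.re (hφper t))
    (Complex.continuous_im.comp hφc) (fun t ↦ congrArg Complex.im (hφper t)) hne
    (fun t ↦ ?_) fun t ↦ ?_
  · simpa [h.integral_KA_mul hφc t] using congrArg Complex.re (heig t)
  · simpa [h.integral_KA_mul hφc t, add_comm] using congrArg Complex.im (heig t)

/-- Every eigenvalue of the double layer operator `A` belongs to `(-π, π]`. -/
theorem double_layer_eigenvalues_real
    (L : ℝ) (hL : 0 < L) (l : ℝ → ℂ)
    (hsm : ContDiff ℝ (⊤ : ℕ∞) l) (hper : ∀ s, l (s + L) = l s)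
    (harc : ∀ s, ‖deriv l s‖ = 1) (hinj : Set.InjOn l (Set.Ico 0 L))
    (horient : ∃ z₀ : ℂ, (∀ s, l s ≠ z₀) ∧
      (∫ t in (0:ℝ)..L, deriv l t / (l t - z₀)) = 2 * (π : ℂ) * Complex.I)
    (φ : ℝ → ℂ) (hφc : Continuous φ) (hφper : ∀ x, φ (x + L) = φ x)
    (hφne : ∃ s, φ s ≠ 0) (lam : ℂ)
    (heig : ∀ s : ℝ, (∫ t in (0:ℝ)..L, (KA l s t : ℂ) * φ t) = lam * φ s) :
    lam.im = 0 ∧ -π < lam.re ∧ lam.re ≤ π := by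
  exact double_layer_eigenvalues_real_general L hL l (hsm.of_le (WithTop.coe_le_coe.2 le_top))
    hper harc hinj horient φ hφc hφper hφne lam heig
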